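/- Fix an integer d ≥ 1, p ∈ (1,∞), a penalty function φ, and let (μ_t)_{t≥0} be a convolution semigroup in 𝒫_p(ℝ^d) with 𝒲_p(μ_t, δ_0) → 0 as t ↓ 0. Then the family (𝒮(t))_{t≥0} is a strongly continuous, convex, monotone, normalized contraction semigroup on C₀(ℝ^d): for every s,t ≥ 0 and f,g ∈ C₀(ℝ^d), (i) 𝒮(t) maps C₀(ℝ^d) to itself, 𝒮(t)0 = 0, f ≤ g implies 𝒮(t)f ≤ 𝒮(t)g, ‖𝒮(t)f − 𝒮(t)g‖_∞ ≤ ‖f−g‖_∞, and 𝒮(t)(λf + (1−λ)g) ≤ λ𝒮(t)f + (1−λ)𝒮(t)g pointwise for all λ ∈ [0,1]; (ii) 𝒮(0)f = f; (iii) 𝒮(t)(𝒮(s)f) = 𝒮(t+s)f; (iv) lim_{t↓0} ‖𝒮(t)f − f‖_∞ = 0. -/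

import Mathlib

open MeasureTheory Filter Topology ENNReal NNReal Set ZeroAtInfty
noncomputable section

/-- Euclidean space ℝ^d. -/
abbrev Ed (d : ℕ) := EuclideanSpace ℝ (Fin d)

/-- `𝒫_p(ℝ^d)`: Borel probability measures with finite `p`-th moment. -/
def MemPp {d : ℕ} (p : ℝ) (μ : Measure (Ed d)) : Prop :=
  IsProbabilityMeasure μ ∧ ∫⁻ x, (‖x‖₊ : ℝ≥0∞) ^ p ∂μ < ∞

/-- `γ` is a coupling of `μ` and `ν`. -/
def IsCoupling {d : ℕ} (γ : Measure (Ed d × Ed d)) (μ ν : Measure (Ed d)) : Prop :=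
  γ.map Prod.fst = μ ∧ γ.map Prod.snd = ν

/-- The `p`-Wasserstein distance `𝒲_p(μ, ν)`. -/
def Wp {d : ℕ} (p : ℝ) (μ ν : Measure (Ed d)) : ℝ :=
  (⨅ γ ∈ {γ : Measure (Ed d × Ed d) | IsCoupling γ μ ν},
    (∫⁻ q, (‖q.2 - q.1‖₊ : ℝ≥0∞) ^ p ∂γ) ^ (1 / p)).toReal

/-- The scaled penalty `φ_t(r) = t·φ(r/t)` for `t > 0`; `φ_0(0) = 0`, `φ_0(r) = ∞` for `r > 0`. -/
def phit (φ : ℝ≥0 → ℝ≥0∞) (t : ℝ) (r : ℝ≥0) : ℝ≥0∞ :=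
  if 0 < t then (t.toNNReal : ℝ≥0∞) * φ (r / t.toNNReal) else (if r = 0 then 0 else ∞)

/-- `φ` is a penalty function: lower semicontinuous, convex, increasing, not constant,
`φ(0) = 0`, and `x ↦ φ(x^{1/p})` is convex. -/
structure IsPenalty (p : ℝ) (φ : ℝ≥0 → ℝ≥0∞) : Prop where
  lsc : LowerSemicontinuous φ
  convex : ∀ a b l m : ℝ≥0, l + m = 1 →
    φ (l * a + m * b) ≤ (l : ℝ≥0∞) * φ a + (m : ℝ≥0∞) * φ b
  mono : Monotone φ
  not_const : ∃ a b, φ a ≠ φ b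
  map_zero : φ 0 = 0
  convex_rpow : ∀ a b l m : ℝ≥0, l + m = 1 →
    φ ((l * a + m * b) ^ (1 / p)) ≤ (l : ℝ≥0∞) * φ (a ^ (1 / p)) + (m : ℝ≥0∞) * φ (b ^ (1 / p))

/-- The convex conjugate `φ*(y) = sup_{x ≥ 0} (xy − φ(x))`. -/
def phiStar (φ : ℝ≥0 → ℝ≥0∞) (y : ℝ≥0) : ℝ≥0∞ :=
  ⨆ x : ℝ≥0, ((x * y : ℝ≥0) : ℝ≥0∞) - φ x

/-- The one-step operator `S(t)f(x) = sup_ν ( ∫ f(x+y) ν(dy) − φ_t(𝒲_p(μ_t, ν)) )`. -/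
def Sop {d : ℕ} (p : ℝ) (φ : ℝ≥0 → ℝ≥0∞) (μt : Measure (Ed d)) (t : ℝ)
    (f : Ed d → ℝ) (x : Ed d) : ℝ :=
  sSup { r : ℝ | ∃ ν : Measure (Ed d), MemPp p ν ∧ ∃ c : ℝ, 0 ≤ c ∧
    phit φ t (Wp p μt ν).toNNReal ≤ ENNReal.ofReal c ∧ r = (∫ y, f (x + y) ∂ν) - c }

/-- The iterated operator `𝒮ⁿ(t) = S(2⁻ⁿ)^{∘ k} ∘ S(t − k·2⁻ⁿ)`, `k = ⌊2ⁿ t⌋`. -/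
def SiterN {d : ℕ} (p : ℝ) (φ : ℝ≥0 → ℝ≥0∞) (μ : ℝ → Measure (Ed d)) (n : ℕ) (t : ℝ)
    (f : Ed d → ℝ) : Ed d → ℝ :=
  (fun g => Sop p φ (μ ((2 : ℝ) ^ n)⁻¹) ((2 : ℝ) ^ n)⁻¹ g)^[⌊(2:ℝ)^n * t⌋₊]
    (Sop p φ (μ (t - ⌊(2:ℝ)^n * t⌋₊ * ((2:ℝ)^n)⁻¹)) (t - ⌊(2:ℝ)^n * t⌋₊ * ((2:ℝ)^n)⁻¹) f)

/-- The limiting operator `𝒮(t)f = lim_n 𝒮ⁿ(t)f` (a decreasing limit, i.e. an infimum). -/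
def Slim {d : ℕ} (p : ℝ) (φ : ℝ≥0 → ℝ≥0∞) (μ : ℝ → Measure (Ed d)) (t : ℝ)
    (f : Ed d → ℝ) (x : Ed d) : ℝ :=
  ⨅ n : ℕ, SiterN p φ μ n t f x

/-- `f ∈ C₀(ℝ^d)`: continuous and vanishing at infinity. -/
def IsC0 {d : ℕ} (f : Ed d → ℝ) : Prop :=
  Continuous f ∧ Tendsto f (cocompact (Ed d)) (𝓝 0)

/-- `(μ_t)_{t ≥ 0}` is a convolution semigroup in `𝒫_p(ℝ^d)`. -/
def IsConvSemigroup {d : ℕ} (p : ℝ) (μ : ℝ → Measure (Ed d)) : Prop :=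
  μ 0 = Measure.dirac 0 ∧ (∀ s t : ℝ, 0 ≤ s → 0 ≤ t → μ (s + t) = (μ s).conv (μ t)) ∧
    ∀ t : ℝ, 0 ≤ t → MemPp p (μ t)

/-- `𝒲_p(μ_t, δ_0) → 0` as `t ↓ 0`. -/
def WContinuousAtZero {d : ℕ} (p : ℝ) (μ : ℝ → Measure (Ed d)) : Prop :=
  Tendsto (fun t => Wp p (μ t) (Measure.dirac 0)) (𝓝[>] (0:ℝ)) (𝓝 0)

/-- The semigroup of the underlying Lévy process, `S^μ(t)f(x) = ∫ f(x+y) μ_t(dy)`. -/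
def Smu {d : ℕ} (μ : ℝ → Measure (Ed d)) (t : ℝ) (f : Ed d → ℝ) (x : Ed d) : ℝ :=
  ∫ y, f (x + y) ∂(μ t)

/-- `f ∈ D(A^μ)` with `A^μ f = Af`: `(S^μ(t)f − f)/t → Af` uniformly as `t ↓ 0`. -/
def HasGenerator {d : ℕ} (μ : ℝ → Measure (Ed d)) (f Af : Ed d → ℝ) : Prop :=
  TendstoUniformly (fun t x => (Smu μ t f x - f x) / t) Af (𝓝[>] (0:ℝ))

/-- `f ∈ C₀¹(ℝ^d)`: continuously differentiable, vanishing at infinity, with gradient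
vanishing at infinity. -/
def IsC01 {d : ℕ} (f : Ed d → ℝ) : Prop :=
  IsC0 f ∧ ContDiff ℝ 1 f ∧ Tendsto (fun x => gradient f x) (cocompact (Ed d)) (𝓝 0)



/-! ### Admissible penalties -/

def Adm (φ : ℝ≥0 → ℝ≥0∞) (t w c : ℝ) : Prop :=
  0 ≤ c ∧ phit φ t w.toNNReal ≤ ENNReal.ofReal c

lemma adm_iff {φ : ℝ≥0 → ℝ≥0∞} {t w c : ℝ} (ht : 0 < t) :
    Adm φ t w c ↔ 0 ≤ c ∧ φ ((w / t).toNNReal) ≤ ENNReal.ofReal (c / t) := by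
  unfold Adm phit
  rw [if_pos ht]
  refine and_congr_right fun hc => ?_
  rw [ENNReal.ofReal_div_of_pos ht, Real.toNNReal_div' ht.le,
    ENNReal.le_div_iff_mul_le (Or.inl (by simpa using ht)) (Or.inl (by simp)), mul_comm]
  rfl

lemma adm_zero {p : ℝ} {φ : ℝ≥0 → ℝ≥0∞} (hφ : IsPenalty p φ) (t : ℝ) : Adm φ t 0 0 := by
  refine ⟨le_rfl, ?_⟩
  unfold phit
  split_ifs <;> simp_all [hφ.map_zero]

lemma adm_mono {p : ℝ} {φ : ℝ≥0 → ℝ≥0∞} (hφ : IsPenalty p φ) {t w w' c : ℝ} (ht : 0 < t)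
    (hw : w ≤ w') (h : Adm φ t w' c) : Adm φ t w c := by
  rw [adm_iff ht] at h ⊢
  refine ⟨h.1, le_trans (hφ.mono ?_) h.2⟩
  exact Real.toNNReal_le_toNNReal (by gcongr)

lemma adm_add {p : ℝ} {φ : ℝ≥0 → ℝ≥0∞} (hφ : IsPenalty p φ) {s t a b c e : ℝ} (hs : 0 < s)
    (ht : 0 < t) (ha : 0 ≤ a) (hb : 0 ≤ b) (h1 : Adm φ s a c) (h2 : Adm φ t b e) :
    Adm φ (s + t) (a + b) (c + e) := by
  have hst : 0 < s + t := by positivity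
  rw [adm_iff hs] at h1
  rw [adm_iff ht] at h2
  rw [adm_iff hst]
  refine ⟨add_nonneg h1.1 h2.1, ?_⟩
  have key := hφ.convex (a / s).toNNReal (b / t).toNNReal (s / (s + t)).toNNReal
    (t / (s + t)).toNNReal (by
      rw [← Real.toNNReal_add (by positivity) (by positivity), ← add_div, div_self hst.ne']; simp)
  rw [← Real.toNNReal_mul (by positivity), ← Real.toNNReal_mul (by positivity),
    ← Real.toNNReal_add (by positivity) (by positivity)] at key
  have e1 : s / (s + t) * (a / s) + t / (s + t) * (b / t) = (a + b) / (s + t) := by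
    field_simp
  rw [e1] at key
  refine key.trans ?_
  have e2 : (c + e) / (s + t) = s / (s + t) * (c / s) + t / (s + t) * (e / t) := by
    field_simp
  have := h1.1
  have := h2.1
  rw [e2, ENNReal.ofReal_add (by positivity) (by positivity),
    ENNReal.ofReal_mul (by positivity), ENNReal.ofReal_mul (by positivity)]
  gcongr
  · exact le_rfl
  · exact h1.2
  · exact le_rfl
  · exact h2.2

def Kset (p : ℝ) (φ : ℝ≥0 → ℝ≥0∞) (t : ℝ) : Set (ℝ × ℝ) :=
  {q | 0 ≤ q.1 ∧ Adm φ t (q.1 ^ (1 / p)) q.2}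

lemma kset_closed {p : ℝ} (hp : 1 < p) {φ : ℝ≥0 → ℝ≥0∞} (hφ : IsPenalty p φ) {t : ℝ}
    (ht : 0 < t) : IsClosed (Kset p φ t) := by
  have h1 := hφ.lsc.isClosed_epigraph
  have hp0 : 0 ≤ 1 / p := by positivity
  have hcont : Continuous (fun q : ℝ × ℝ =>
      ((((q.1 ^ (1 / p)) / t).toNNReal, ENNReal.ofReal (q.2 / t)) : ℝ≥0 × ℝ≥0∞)) := by
    refine Continuous.prodMk ?_ ?_
    · exact continuous_real_toNNReal.comp
        ((continuous_fst.rpow_const (fun _ => Or.inr hp0)).div_const t)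
    · exact ENNReal.continuous_ofReal.comp (continuous_snd.div_const t)
  have h2 := h1.preimage hcont
  have h3 : Kset p φ t = {q : ℝ × ℝ | 0 ≤ q.1} ∩ ({q : ℝ × ℝ | 0 ≤ q.2} ∩
      ((fun q : ℝ × ℝ => ((((q.1 ^ (1 / p)) / t).toNNReal, ENNReal.ofReal (q.2 / t)) :
        ℝ≥0 × ℝ≥0∞)) ⁻¹' {q | φ q.1 ≤ q.2})) := by
    ext q
    simp only [Kset, adm_iff ht, mem_setOf_eq, mem_inter_iff, mem_preimage]
  rw [h3]
  exact (isClosed_le continuous_const continuous_fst).inter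
    ((isClosed_le continuous_const continuous_snd).inter h2)

lemma toNNReal_rpow_div {p : ℝ} (hp : 1 < p) {a t : ℝ} (ha : 0 ≤ a) (ht : 0 < t) :
    (a ^ (1 / p) / t).toNNReal = ((a / t ^ p).toNNReal) ^ (1 / p) := by
  have hp0 : p ≠ 0 := by positivity
  rw [← Real.toNNReal_rpow_of_nonneg (by positivity), Real.div_rpow ha (by positivity),
    ← Real.rpow_mul ht.le, mul_one_div_cancel hp0, Real.rpow_one]

lemma kset_convex {p : ℝ} (hp : 1 < p) {φ : ℝ≥0 → ℝ≥0∞} (hφ : IsPenalty p φ) {t : ℝ}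
    (ht : 0 < t) : Convex ℝ (Kset p φ t) := by
  rintro ⟨a, c⟩ ⟨ha, h1⟩ ⟨b, e⟩ ⟨hb, h2⟩ l m hl hm hlm
  simp only at ha h1 hb h2
  rw [adm_iff ht, toNNReal_rpow_div hp ha ht] at h1
  rw [adm_iff ht, toNNReal_rpow_div hp hb ht] at h2
  obtain ⟨hc, h1⟩ := h1
  obtain ⟨he, h2⟩ := h2
  have hab : 0 ≤ l * a + m * b := by positivity
  refine ⟨by simpa using hab, ?_⟩
  simp only [Prod.smul_mk, smul_eq_mul, Prod.mk_add_mk]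
  rw [adm_iff ht, toNNReal_rpow_div hp hab ht]
  refine ⟨by positivity, ?_⟩
  have key := hφ.convex_rpow (a / t ^ p).toNNReal (b / t ^ p).toNNReal l.toNNReal m.toNNReal
    (by rw [← Real.toNNReal_add hl hm, hlm]; simp)
  rw [← Real.toNNReal_mul hl, ← Real.toNNReal_mul hm,
    ← Real.toNNReal_add (by positivity) (by positivity)] at key
  have e1 : l * (a / t ^ p) + m * (b / t ^ p) = (l * a + m * b) / t ^ p := by ring
  rw [e1] at key
  refine key.trans ?_
  have e2 : (l * c + m * e) / t = l * (c / t) + m * (e / t) := by ring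
  rw [e2, ENNReal.ofReal_add (by positivity) (by positivity),
    ENNReal.ofReal_mul (by positivity), ENNReal.ofReal_mul (by positivity)]
  gcongr
  · exact le_rfl
  · exact le_rfl

lemma adm_growth {p : ℝ} (hp : 1 < p) {φ : ℝ≥0 → ℝ≥0∞} (hφ : IsPenalty p φ) :
    ∃ A B : ℝ, 0 ≤ A ∧ 0 ≤ B ∧ ∀ t w c : ℝ, 0 < t → 0 ≤ w → Adm φ t w c →
      w ^ p ≤ A * c * t ^ (p - 1) + B * t ^ p := by
  have hp0 : p ≠ 0 := by positivity
  obtain ⟨z, hz⟩ : ∃ z, φ z ≠ 0 := by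
    by_contra! h
    obtain ⟨a, b, hab⟩ := hφ.not_const
    exact hab (by rw [h, h])
  have hz0 : z ≠ 0 := fun h => hz (by rw [h, hφ.map_zero])
  obtain ⟨m, hm0, hm⟩ : ∃ m : ℝ≥0, 0 < m ∧ (m : ℝ≥0∞) ≤ φ z := by
    obtain ⟨m, h1, h2⟩ := ENNReal.lt_iff_exists_nnreal_btwn.1 (pos_iff_ne_zero.2 hz)
    exact ⟨m, by simpa using h1, h2.le⟩
  set x0 : ℝ≥0 := z ^ p with hx0
  have hx0pos : 0 < x0 := NNReal.rpow_pos (pos_iff_ne_zero.2 hz0)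
  have hzx : x0 ^ (1 / p) = z := by
    rw [hx0, ← NNReal.rpow_mul, mul_one_div_cancel hp0, NNReal.rpow_one]
  refine ⟨x0 / m, x0, by positivity, by positivity, fun t w c ht hw h => ?_⟩
  rw [adm_iff ht] at h
  obtain ⟨hc, h⟩ := h
  set u : ℝ≥0 := (w / t).toNNReal with hu
  have hu' : (u : ℝ) = w / t := Real.coe_toNNReal _ (by positivity)
  have main : (u : ℝ) ^ p ≤ x0 + x0 / m * (c / t) := by
    by_cases hx : u ^ p ≤ x0
    · have : (u : ℝ) ^ p ≤ x0 := by exact_mod_cast hx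
      have h3 : 0 ≤ (x0 : ℝ) / m * (c / t) := by positivity
      linarith
    · push Not at hx
      have hup : 0 < u ^ p := hx0pos.trans hx
      have key := hφ.convex_rpow (u ^ p) 0 (x0 / u ^ p) (1 - x0 / u ^ p)
        (add_tsub_cancel_of_le ((div_le_one hup).2 hx.le))
      have e0 : (0 : ℝ≥0) ^ (1 / p) = 0 := NNReal.zero_rpow (by positivity)
      rw [mul_zero, add_zero, div_mul_cancel₀ _ hup.ne', hzx, e0, hφ.map_zero, mul_zero, add_zero,
        ← NNReal.rpow_mul, mul_one_div_cancel hp0, NNReal.rpow_one] at key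
      have k2 : (m : ℝ≥0∞) ≤ ((x0 / u ^ p : ℝ≥0) : ℝ≥0∞) * ENNReal.ofReal (c / t) :=
        hm.trans (key.trans (by gcongr))
      have k3 : (m : ℝ) ≤ x0 / (u : ℝ) ^ p * (c / t) := by
        rw [ENNReal.ofReal, ← ENNReal.coe_mul, ENNReal.coe_le_coe] at k2
        have := NNReal.coe_le_coe.2 k2
        rw [NNReal.coe_mul, Real.coe_toNNReal _ (by positivity)] at this
        simpa using this
      have hup' : 0 < (u : ℝ) ^ p := by exact_mod_cast hup
      have k4 : (u : ℝ) ^ p ≤ x0 / m * (c / t) := by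
        rw [div_mul_eq_mul_div, le_div_iff₀ hup'] at k3
        rw [div_mul_eq_mul_div, le_div_iff₀ (by positivity)]
        linarith
      have : 0 ≤ (x0 : ℝ) := by positivity
      linarith
  rw [hu', Real.div_rpow hw ht.le, div_le_iff₀ (by positivity)] at main
  have e3 : t ^ p = t ^ (p - 1) * t := by
    rw [← Real.rpow_add_one ht.ne']; congr 1; ring
  refine main.trans (le_of_eq ?_)
  rw [e3]
  field_simp
  ring

/-! ### Wasserstein distance -/

lemma lmink {d : ℕ} {Ω : Type*} [MeasurableSpace Ω] (m : Measure Ω) {p : ℝ} (hp : 1 < p)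
    {u v : Ω → Ed d} (hu : Measurable u) (hv : Measurable v) :
    (∫⁻ q, (‖u q + v q‖₊ : ℝ≥0∞) ^ p ∂m) ^ (1 / p) ≤
      (∫⁻ q, (‖u q‖₊ : ℝ≥0∞) ^ p ∂m) ^ (1 / p) + (∫⁻ q, (‖v q‖₊ : ℝ≥0∞) ^ p ∂m) ^ (1 / p) := by
  refine le_trans ?_ (ENNReal.lintegral_Lp_add_le (μ := m) (p := p)
    (f := fun q => (‖u q‖₊ : ℝ≥0∞)) (g := fun q => (‖v q‖₊ : ℝ≥0∞))
    (by fun_prop) (by fun_prop) hp.le)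
  gcongr with q
  simp only [Pi.add_apply]
  exact_mod_cast nnnorm_add_le (u q) (v q)

/-- `p`-th moment -/
def mom {d : ℕ} (p : ℝ) (ν : Measure (Ed d)) : ℝ := ∫ y, ‖y‖ ^ p ∂ν

lemma coe_nnnorm_rpow {d : ℕ} {p : ℝ} (hp : 1 < p) (x : Ed d) :
    (‖x‖₊ : ℝ≥0∞) ^ p = ENNReal.ofReal (‖x‖ ^ p) := by
  rw [← ENNReal.ofReal_rpow_of_nonneg (norm_nonneg _) (by positivity)]
  simp [ENNReal.ofReal, norm_toNNReal]

lemma mom_nonneg {d : ℕ} (p : ℝ) (ν : Measure (Ed d)) : 0 ≤ mom p ν :=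
  integral_nonneg fun _ => by positivity

lemma integrable_norm_rpow {d : ℕ} {p : ℝ} (hp : 1 < p) {ν : Measure (Ed d)} (h : MemPp p ν) :
    Integrable (fun y : Ed d => ‖y‖ ^ p) ν := by
  have hm : Measurable (fun y : Ed d => ‖y‖ ^ p) := by fun_prop
  refine ⟨hm.aestronglyMeasurable, ?_⟩
  rw [hasFiniteIntegral_iff_ofReal (Eventually.of_forall fun _ => by positivity)]
  simpa only [coe_nnnorm_rpow hp] using h.2

lemma lmom {d : ℕ} {p : ℝ} (hp : 1 < p) {ν : Measure (Ed d)} (h : MemPp p ν) :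
    ∫⁻ x, (‖x‖₊ : ℝ≥0∞) ^ p ∂ν = ENNReal.ofReal (mom p ν) := by
  rw [mom, ofReal_integral_eq_lintegral_ofReal (integrable_norm_rpow hp h)
    (Eventually.of_forall fun _ => by positivity)]
  simp only [coe_nnnorm_rpow hp]

lemma wp_nonneg {d : ℕ} (p : ℝ) (μ ν : Measure (Ed d)) : 0 ≤ Wp p μ ν := ENNReal.toReal_nonneg

lemma wp_le {d : ℕ} {p : ℝ} {μ ν : Measure (Ed d)} {γ : Measure (Ed d × Ed d)}
    (h : IsCoupling γ μ ν) {w : ℝ} (hw : 0 ≤ w)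
    (hc : (∫⁻ q, (‖q.2 - q.1‖₊ : ℝ≥0∞) ^ p ∂γ) ^ (1 / p) ≤ ENNReal.ofReal w) : Wp p μ ν ≤ w := by
  unfold Wp
  refine ENNReal.toReal_le_of_le_ofReal hw (le_trans ?_ hc)
  exact iInf₂_le (f := fun (γ : Measure (Ed d × Ed d)) (_ : γ ∈ {γ | IsCoupling γ μ ν}) =>
    (∫⁻ q, (‖q.2 - q.1‖₊ : ℝ≥0∞) ^ p ∂γ) ^ (1 / p)) γ h

lemma wp_self {d : ℕ} {p : ℝ} (hp : 1 < p) (μ : Measure (Ed d)) : Wp p μ μ = 0 := by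
  refine le_antisymm ?_ (wp_nonneg _ _ _)
  have hm : Measurable (fun x : Ed d => (x, x)) := by fun_prop
  refine wp_le (γ := μ.map (fun x => (x, x))) ⟨?_, ?_⟩ le_rfl ?_
  · rw [Measure.map_map measurable_fst hm]; exact Measure.map_id
  · rw [Measure.map_map measurable_snd hm]; exact Measure.map_id
  · rw [lintegral_map (by fun_prop) hm]
    have hp0 : 0 < p := by positivity
    simp [hp0]

lemma coupling_fst {d : ℕ} {μ ν : Measure (Ed d)} {γ : Measure (Ed d × Ed d)}
    (h : IsCoupling γ μ ν) {F : Ed d → ℝ≥0∞} (hF : Measurable F) :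
    ∫⁻ q, F q.1 ∂γ = ∫⁻ x, F x ∂μ := by
  rw [← h.1, lintegral_map hF measurable_fst]

lemma coupling_snd {d : ℕ} {μ ν : Measure (Ed d)} {γ : Measure (Ed d × Ed d)}
    (h : IsCoupling γ μ ν) {F : Ed d → ℝ≥0∞} (hF : Measurable F) :
    ∫⁻ q, F q.2 ∂γ = ∫⁻ x, F x ∂ν := by
  rw [← h.2, lintegral_map hF measurable_snd]

lemma coupling_prob {d : ℕ} {μ ν : Measure (Ed d)} {γ : Measure (Ed d × Ed d)}
    (h : IsCoupling γ μ ν) [IsProbabilityMeasure μ] : IsProbabilityMeasure γ := by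
  constructor
  have : μ univ = 1 := measure_univ
  rw [← h.1, Measure.map_apply measurable_fst MeasurableSet.univ] at this
  simpa using this

lemma exists_coupling {d : ℕ} {p : ℝ} (hp : 1 < p) {μ ν : Measure (Ed d)} (hμ : MemPp p μ)
    (hν : MemPp p ν) {η : ℝ} (hη : 0 < η) :
    ∃ γ : Measure (Ed d × Ed d), IsCoupling γ μ ν ∧
      ∫⁻ q, (‖q.2 - q.1‖₊ : ℝ≥0∞) ^ p ∂γ ≤ ENNReal.ofReal (Wp p μ ν ^ p + η) := by
  have hp0 : 0 < p := by positivity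
  have := hμ.1
  have := hν.1
  have hfin : (⨅ γ ∈ {γ : Measure (Ed d × Ed d) | IsCoupling γ μ ν},
    (∫⁻ q, (‖q.2 - q.1‖₊ : ℝ≥0∞) ^ p ∂γ) ^ (1 / p)) ≠ ∞ := by
    have hc : IsCoupling (μ.prod ν) μ ν := by
      refine ⟨?_, ?_⟩
      · rw [Measure.map_fst_prod]; simp
      · rw [Measure.map_snd_prod]; simp
    refine ne_top_of_le_ne_top ?_ (iInf₂_le (μ.prod ν) hc)
    have hm := lmink (μ.prod ν) hp (u := fun q : Ed d × Ed d => q.2) (v := fun q => - q.1)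
      (by fun_prop) (by fun_prop)
    simp only [← sub_eq_add_neg, nnnorm_neg] at hm
    refine ne_top_of_le_ne_top ?_ hm
    rw [coupling_fst hc (F := fun x => (‖x‖₊ : ℝ≥0∞) ^ p) (by fun_prop),
      coupling_snd hc (F := fun x => (‖x‖₊ : ℝ≥0∞) ^ p) (by fun_prop)]
    exact ENNReal.add_ne_top.2 ⟨(ENNReal.rpow_lt_top_of_nonneg (by positivity) hν.2.ne).ne,
      (ENNReal.rpow_lt_top_of_nonneg (by positivity) hμ.2.ne).ne⟩
  have hw0 := wp_nonneg p μ ν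
  have hlt : (⨅ γ ∈ {γ : Measure (Ed d × Ed d) | IsCoupling γ μ ν},
    (∫⁻ q, (‖q.2 - q.1‖₊ : ℝ≥0∞) ^ p ∂γ) ^ (1 / p)) <
      ENNReal.ofReal ((Wp p μ ν ^ p + η) ^ (1 / p)) := by
    rw [ENNReal.lt_ofReal_iff_toReal_lt hfin]
    change Wp p μ ν < _
    calc Wp p μ ν = (Wp p μ ν ^ p) ^ (1 / p) := by
          rw [← Real.rpow_mul hw0, mul_one_div_cancel hp0.ne', Real.rpow_one]
      _ < _ := Real.rpow_lt_rpow (by positivity) (by linarith) (by positivity)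
  simp only [iInf_lt_iff] at hlt
  obtain ⟨γ, hγ, h⟩ := hlt
  refine ⟨γ, hγ, ?_⟩
  rw [← ENNReal.ofReal_rpow_of_nonneg (by positivity) (by positivity)] at h
  exact ((ENNReal.rpow_lt_rpow_iff (by positivity)).1 h).le

lemma ofReal_rpow' {a b : ℝ} (ha : 0 ≤ a) (hb : 0 ≤ b) :
    ENNReal.ofReal a ^ b = ENNReal.ofReal (a ^ b) := ENNReal.ofReal_rpow_of_nonneg ha hb

lemma tendsto_root {p : ℝ} (hp : 1 < p) (a : ℝ) :
    Tendsto (fun η : ℝ => (a + η) ^ (1 / p)) (𝓝[>] 0) (𝓝 (a ^ (1 / p))) := by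
  have : Continuous (fun η : ℝ => (a + η) ^ (1 / p)) :=
    (continuous_const.add continuous_id).rpow_const (fun _ => Or.inr (by positivity))
  simpa using (this.tendsto 0).mono_left nhdsWithin_le_nhds

lemma root_pow {p : ℝ} (hp : 1 < p) {a : ℝ} (ha : 0 ≤ a) : (a ^ p) ^ (1 / p) = a := by
  rw [← Real.rpow_mul ha, mul_one_div_cancel (by positivity), Real.rpow_one]

lemma pow_root {p : ℝ} (hp : 1 < p) {a : ℝ} (ha : 0 ≤ a) : (a ^ (1 / p)) ^ p = a := by
  rw [← Real.rpow_mul ha, one_div_mul_cancel (by positivity), Real.rpow_one]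

lemma mom_le {d : ℕ} {p : ℝ} (hp : 1 < p) {μ ν : Measure (Ed d)} (hμ : MemPp p μ)
    (hν : MemPp p ν) : mom p ν ^ (1 / p) ≤ mom p μ ^ (1 / p) + Wp p μ ν := by
  have hw0 := wp_nonneg p μ ν
  have h1 := mom_nonneg p μ
  have h2 := mom_nonneg p ν
  rw [← root_pow hp hw0]
  refine ge_of_tendsto (tendsto_const_nhds.add (tendsto_root hp _)) ?_
  filter_upwards [self_mem_nhdsWithin] with η (hη : 0 < η)
  obtain ⟨γ, hγ, hc⟩ := exists_coupling hp hμ hν hη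
  have hm := lmink γ hp (u := fun q : Ed d × Ed d => q.1) (v := fun q => q.2 - q.1)
      (by fun_prop) (by fun_prop)
  simp only [add_sub_cancel] at hm
  rw [coupling_fst hγ (F := fun x => (‖x‖₊ : ℝ≥0∞) ^ p) (by fun_prop),
      coupling_snd hγ (F := fun x => (‖x‖₊ : ℝ≥0∞) ^ p) (by fun_prop), lmom hp hμ, lmom hp hν] at hm
  have hm2 := hm.trans (add_le_add_right (ENNReal.rpow_le_rpow hc (by positivity)) _)
  rw [ofReal_rpow' (by positivity) (by positivity), ofReal_rpow' (by positivity) (by positivity),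
    ofReal_rpow' (by positivity) (by positivity),
    ← ENNReal.ofReal_add (by positivity) (by positivity)] at hm2
  exact (ENNReal.ofReal_le_ofReal_iff (by positivity)).1 hm2

lemma memPp_dirac {d : ℕ} {p : ℝ} (hp : 1 < p) : MemPp p (Measure.dirac (0 : Ed d)) := by
  have hp0 : 0 < p := by positivity
  refine ⟨inferInstance, ?_⟩
  rw [lintegral_dirac]
  simp [hp0]

lemma mom_le_dirac {d : ℕ} {p : ℝ} (hp : 1 < p) {μ : Measure (Ed d)} (hμ : MemPp p μ) :
    mom p μ ^ (1 / p) ≤ Wp p μ (Measure.dirac 0) := by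
  have hd := memPp_dirac (d := d) hp
  have hw0 := wp_nonneg p μ (Measure.dirac 0)
  have h1 := mom_nonneg p μ
  have hp0 : 0 < p := by positivity
  rw [← root_pow hp hw0]
  refine ge_of_tendsto (tendsto_root hp _) ?_
  filter_upwards [self_mem_nhdsWithin] with η (hη : 0 < η)
  obtain ⟨γ, hγ, hc⟩ := exists_coupling hp hμ hd hη
  have hm := lmink γ hp (u := fun q : Ed d × Ed d => q.2) (v := fun q => - (q.2 - q.1))
      (by fun_prop) (by fun_prop)
  simp only [nnnorm_neg] at hm
  have e : ∀ q : Ed d × Ed d, q.2 + -(q.2 - q.1) = q.1 := fun q => by abel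
  simp only [e] at hm
  have e0 : ∫⁻ x, (‖x‖₊ : ℝ≥0∞) ^ p ∂(Measure.dirac (0 : Ed d)) = 0 := by
    rw [lintegral_dirac]; simp [hp0]
  rw [coupling_fst hγ (F := fun x => (‖x‖₊ : ℝ≥0∞) ^ p) (by fun_prop),
      coupling_snd hγ (F := fun x => (‖x‖₊ : ℝ≥0∞) ^ p) (by fun_prop), lmom hp hμ, e0,
      ENNReal.zero_rpow_of_pos (by positivity), zero_add] at hm
  have hm2 := hm.trans (ENNReal.rpow_le_rpow hc (by positivity))
  rw [ofReal_rpow' (by positivity) (by positivity),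
    ofReal_rpow' (by positivity) (by positivity)] at hm2
  exact (ENNReal.ofReal_le_ofReal_iff (by positivity)).1 hm2

lemma mom_dirac {d : ℕ} {p : ℝ} (hp : 1 < p) : mom p (Measure.dirac (0 : Ed d)) = 0 := by
  have hp0 : 0 < p := by positivity
  unfold mom
  rw [integral_dirac]
  simp [hp0.ne']

/-! ### Composition of couplings -/

def selK {X Y : Type*} [MeasurableSpace X] [MeasurableSpace Y] (ν2 : ℕ → Measure Y)
    (ι : X → ℕ) (hι : Measurable ι) : ProbabilityTheory.Kernel X Y :=
  (ProbabilityTheory.Kernel.ofFunOfCountable ν2).comap ι hι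

lemma selK_apply {X Y : Type*} [MeasurableSpace X] [MeasurableSpace Y]
    (ν2 : ℕ → Measure Y) (ι : X → ℕ) (hι : Measurable ι) (x : X) :
    selK ν2 ι hι x = ν2 (ι x) := rfl

lemma selK_markov {X Y : Type*} [MeasurableSpace X] [MeasurableSpace Y]
    (ν2 : ℕ → Measure Y) (ι : X → ℕ) (hι : Measurable ι) (h : ∀ n, IsProbabilityMeasure (ν2 n)) :
    ProbabilityTheory.IsMarkovKernel (selK ν2 ι hι) :=
  ⟨fun x => h (ι x)⟩

def compM {d : ℕ} (ν1 : Measure (Ed d)) (ν2 : ℕ → Measure (Ed d)) (ι : Ed d → ℕ)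
    (hι : Measurable ι) : Measure (Ed d) :=
  (ν1.compProd (selK ν2 ι hι)).map (fun q => q.1 + q.2)

lemma lintegral_compM {d : ℕ} (ν1 : Measure (Ed d)) (ν2 : ℕ → Measure (Ed d)) (ι : Ed d → ℕ)
    (hι : Measurable ι) [IsProbabilityMeasure ν1] (h : ∀ n, IsProbabilityMeasure (ν2 n))
    {F : Ed d → ℝ≥0∞} (hF : Measurable F) :
    ∫⁻ y, F y ∂(compM ν1 ν2 ι hι) = ∫⁻ y, ∫⁻ z, F (y + z) ∂(ν2 (ι y)) ∂ν1 := by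
  have := selK_markov ν2 ι hι h
  unfold compM
  rw [lintegral_map hF (by fun_prop), Measure.lintegral_compProd (by fun_prop)]
  rfl

lemma compM_prob {d : ℕ} (ν1 : Measure (Ed d)) (ν2 : ℕ → Measure (Ed d)) (ι : Ed d → ℕ)
    (hι : Measurable ι) [IsProbabilityMeasure ν1] (h : ∀ n, IsProbabilityMeasure (ν2 n)) :
    IsProbabilityMeasure (compM ν1 ν2 ι hι) := by
  have := selK_markov ν2 ι hι h
  unfold compM
  exact Measure.isProbabilityMeasure_map (by fun_prop)

lemma integral_compM {d : ℕ} (ν1 : Measure (Ed d)) (ν2 : ℕ → Measure (Ed d)) (ι : Ed d → ℕ)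
    (hι : Measurable ι) [IsProbabilityMeasure ν1] (h : ∀ n, IsProbabilityMeasure (ν2 n))
    {F : Ed d → ℝ} (hF : Continuous F) {M : ℝ} (hM : ∀ x, |F x| ≤ M) :
    Integrable (fun y => ∫ z, F (y + z) ∂(ν2 (ι y))) ν1 ∧
    ∫ y, F y ∂(compM ν1 ν2 ι hι) = ∫ y, ∫ z, F (y + z) ∂(ν2 (ι y)) ∂ν1 := by
  have := selK_markov ν2 ι hι h
  have hm : Measurable F := hF.measurable
  have hInt : Integrable (fun q : Ed d × Ed d => F (q.1 + q.2))
      (ν1.compProd (selK ν2 ι hι)) := by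
    refine Integrable.of_bound (C := M) ?_ (Eventually.of_forall fun q => hM _)
    have : Measurable (fun q : Ed d × Ed d => F (q.1 + q.2)) := by fun_prop
    exact this.aestronglyMeasurable
  refine ⟨?_, ?_⟩
  · have hsm : StronglyMeasurable (fun q : Ed d × Ed d => F (q.1 + q.2)) := by
      have : Measurable (fun q : Ed d × Ed d => F (q.1 + q.2)) := by fun_prop
      exact this.stronglyMeasurable
    have hsm2 := hsm.integral_kernel_prod_right' (κ := selK ν2 ι hι)
    refine Integrable.of_bound (C := M) hsm2.aestronglyMeasurable (Eventually.of_forall fun y => ?_)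
    have := h (ι y)
    have hb := norm_integral_le_of_norm_le_const (μ := ν2 (ι y)) (f := fun z => F (y + z)) (C := M)
      (Eventually.of_forall fun z => hM _)
    simpa using hb
  · unfold compM
    rw [integral_map (by fun_prop) hm.aestronglyMeasurable, Measure.integral_compProd hInt]
    rfl

lemma lintegral_conv' {d : ℕ} (μ1 μ2 : Measure (Ed d)) [IsProbabilityMeasure μ1]
    [IsProbabilityMeasure μ2] {F : Ed d → ℝ≥0∞} (hF : Measurable F) :
    ∫⁻ y, F y ∂(μ1.conv μ2) = ∫⁻ x, ∫⁻ y, F (x + y) ∂μ2 ∂μ1 := by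
  unfold Measure.conv
  rw [lintegral_map hF (by fun_prop), lintegral_prod _ (by fun_prop)]

lemma comp_wp_aux {d : ℕ} {p : ℝ} (hp : 1 < p) {μ1 μ2 ν1 : Measure (Ed d)}
    {ν2 : ℕ → Measure (Ed d)} (ι : Ed d → ℕ) (hι : Measurable ι)
    (hμ1 : MemPp p μ1) (hμ2 : MemPp p μ2) (hν1 : MemPp p ν1) (hν2 : ∀ n, MemPp p (ν2 n))
    {C : ℝ} (hC : ∀ n, Wp p μ2 (ν2 n) ≤ C) {η : ℝ} (hη : 0 < η) :
    ∃ γ : Measure (Ed d × Ed d), IsCoupling γ (μ1.conv μ2) (compM ν1 ν2 ι hι) ∧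
      (∫⁻ q, (‖q.2 - q.1‖₊ : ℝ≥0∞) ^ p ∂γ) ^ (1 / p) ≤
        ENNReal.ofReal ((Wp p μ1 ν1 ^ p + η) ^ (1 / p) +
          (∫ y, Wp p μ2 (ν2 (ι y)) ^ p ∂ν1 + η) ^ (1 / p)) := by
  have hp0 : 0 < p := by positivity
  have := hμ1.1
  have := hμ2.1
  have := hν1.1
  have hpr : ∀ n, IsProbabilityMeasure (ν2 n) := fun n => (hν2 n).1
  obtain ⟨γ1, hγ1, hc1⟩ := exists_coupling hp hμ1 hν1 hη
  choose γ2 hγ2 hc2 using fun n => exists_coupling hp hμ2 (hν2 n) hη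
  have := coupling_prob hγ1
  have hpr2 : ∀ n, IsProbabilityMeasure (γ2 n) := fun n => coupling_prob (hγ2 n)
  have hι2 : Measurable (fun q : Ed d × Ed d => ι q.2) := hι.comp measurable_snd
  have := selK_markov γ2 _ hι2 hpr2
  set Γ := γ1.compProd (selK γ2 _ hι2) with hΓ
  have hadd : Measurable (fun q : (Ed d × Ed d) × (Ed d × Ed d) =>
    (q.1.1 + q.2.1, q.1.2 + q.2.2)) := by fun_prop
  have hcompint : ∀ F : (Ed d × Ed d) × (Ed d × Ed d) → ℝ≥0∞, Measurable F →
      ∫⁻ q, F q ∂Γ = ∫⁻ a, ∫⁻ b, F (a, b) ∂(γ2 (ι a.2)) ∂γ1 := by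
    intro F hF
    rw [hΓ, Measure.lintegral_compProd hF]
    rfl
  refine ⟨Γ.map (fun q => (q.1.1 + q.2.1, q.1.2 + q.2.2)), ⟨?_, ?_⟩, ?_⟩
  · refine Measure.ext_of_lintegral _ fun F hF => ?_
    rw [lintegral_map hF measurable_fst, lintegral_map (by fun_prop) hadd,
      hcompint _ (by fun_prop), lintegral_conv' _ _ hF, ← coupling_fst hγ1]
    · refine lintegral_congr fun a => ?_
      rw [← coupling_fst (hγ2 (ι a.2)) (F := fun y => F (a.1 + y)) (by fun_prop)]
    · exact Measurable.lintegral_prod_right' (f := fun q : Ed d × Ed d => F (q.1 + q.2))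
        (by fun_prop)
  · refine Measure.ext_of_lintegral _ fun F hF => ?_
    have hk := selK_markov ν2 ι hι hpr
    rw [lintegral_map hF measurable_snd, lintegral_map (by fun_prop) hadd,
      hcompint _ (by fun_prop), lintegral_compM _ _ _ _ hpr hF,
      ← coupling_snd hγ1 (F := fun y => ∫⁻ z, F (y + z) ∂(ν2 (ι y)))]
    · refine lintegral_congr fun a => ?_
      rw [← coupling_snd (hγ2 (ι a.2)) (F := fun y => F (a.2 + y)) (by fun_prop)]
    · exact Measurable.lintegral_kernel_prod_right' (κ := selK ν2 ι hι)
        (f := fun q : Ed d × Ed d => F (q.1 + q.2)) (by fun_prop)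
  · rw [lintegral_map (by fun_prop) hadd]
    have hm := lmink Γ hp (u := fun q => q.1.2 - q.1.1) (v := fun q => q.2.2 - q.2.1)
      (by fun_prop) (by fun_prop)
    have e : ∀ q : (Ed d × Ed d) × (Ed d × Ed d),
      q.1.2 - q.1.1 + (q.2.2 - q.2.1) = q.1.2 + q.2.2 - (q.1.1 + q.2.1) := fun q => by abel
    simp only [e] at hm
    refine hm.trans ?_
    have hw : 0 ≤ Wp p μ1 ν1 := wp_nonneg _ _ _
    have hI : 0 ≤ ∫ y, Wp p μ2 (ν2 (ι y)) ^ p ∂ν1 :=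
      integral_nonneg fun y => Real.rpow_nonneg (wp_nonneg _ _ _) _
    have r1 := ofReal_rpow' (a := Wp p μ1 ν1 ^ p + η) (b := 1 / p) (by positivity) (by positivity)
    have r2 := ofReal_rpow' (a := (∫ y, Wp p μ2 (ν2 (ι y)) ^ p ∂ν1) + η) (b := 1 / p)
      (add_nonneg hI hη.le) (by positivity)
    rw [ENNReal.ofReal_add (by positivity) (Real.rpow_nonneg (add_nonneg hI hη.le) _), ← r1, ← r2]
    gcongr
    · rw [hcompint (fun q => (‖q.1.2 - q.1.1‖₊ : ℝ≥0∞) ^ p) (by fun_prop)]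
      simpa using hc1
    · rw [hcompint (fun q => (‖q.2.2 - q.2.1‖₊ : ℝ≥0∞) ^ p) (by fun_prop)]
      have hmw : Measurable (fun y => Wp p μ2 (ν2 (ι y)) ^ p) :=
        (measurable_from_nat (f := fun n => Wp p μ2 (ν2 n) ^ p)).comp hι
      have hInt : Integrable (fun y => Wp p μ2 (ν2 (ι y)) ^ p) ν1 := by
        refine Integrable.of_bound (C := C ^ p) hmw.aestronglyMeasurable
          (Eventually.of_forall fun y => ?_)
        have h0 := wp_nonneg p μ2 (ν2 (ι y))
        rw [Real.norm_of_nonneg (by positivity)]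
        exact Real.rpow_le_rpow h0 (hC _) hp0.le
      calc _ ≤ ∫⁻ a, ENNReal.ofReal (Wp p μ2 (ν2 (ι a.2)) ^ p + η) ∂γ1 :=
            lintegral_mono fun a => hc2 (ι a.2)
        _ = ∫⁻ y, ENNReal.ofReal (Wp p μ2 (ν2 (ι y)) ^ p + η) ∂ν1 :=
            coupling_snd hγ1 (F := fun y => ENNReal.ofReal (Wp p μ2 (ν2 (ι y)) ^ p + η))
              (by fun_prop)
        _ = ENNReal.ofReal (∫ y, (Wp p μ2 (ν2 (ι y)) ^ p + η) ∂ν1) := by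
            have hInt2 : Integrable (fun y => Wp p μ2 (ν2 (ι y)) ^ p + η) ν1 :=
              hInt.add (integrable_const _)
            exact (ofReal_integral_eq_lintegral_ofReal hInt2 (Eventually.of_forall fun y =>
              add_nonneg (Real.rpow_nonneg (wp_nonneg _ _ _) _) hη.le)).symm
        _ = _ := by rw [integral_add hInt (integrable_const _)]; simp

lemma comp_wp {d : ℕ} {p : ℝ} (hp : 1 < p) {μ1 μ2 ν1 : Measure (Ed d)}
    {ν2 : ℕ → Measure (Ed d)} (ι : Ed d → ℕ) (hι : Measurable ι)
    (hμ1 : MemPp p μ1) (hμ2 : MemPp p μ2) (hν1 : MemPp p ν1) (hν2 : ∀ n, MemPp p (ν2 n))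
    {C : ℝ} (hC : ∀ n, Wp p μ2 (ν2 n) ≤ C) :
    Wp p (μ1.conv μ2) (compM ν1 ν2 ι hι) ≤
      Wp p μ1 ν1 + (∫ y, Wp p μ2 (ν2 (ι y)) ^ p ∂ν1) ^ (1 / p) := by
  have hI : 0 ≤ ∫ y, Wp p μ2 (ν2 (ι y)) ^ p ∂ν1 :=
      integral_nonneg fun y => Real.rpow_nonneg (wp_nonneg _ _ _) _
  have hw : 0 ≤ Wp p μ1 ν1 := wp_nonneg _ _ _
  rw [← root_pow hp hw]
  refine ge_of_tendsto ((tendsto_root hp _).add (tendsto_root hp _)) ?_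
  filter_upwards [self_mem_nhdsWithin] with η (hη : 0 < η)
  obtain ⟨γ, h1, h2⟩ := comp_wp_aux hp ι hι hμ1 hμ2 hν1 hν2 hC hη
  exact wp_le h1 (add_nonneg (by positivity) (Real.rpow_nonneg (add_nonneg hI hη.le) _)) h2

lemma comp_memPp {d : ℕ} {p : ℝ} (hp : 1 < p) {μ1 μ2 ν1 : Measure (Ed d)}
    {ν2 : ℕ → Measure (Ed d)} (ι : Ed d → ℕ) (hι : Measurable ι)
    (hμ1 : MemPp p μ1) (hμ2 : MemPp p μ2) (hν1 : MemPp p ν1) (hν2 : ∀ n, MemPp p (ν2 n))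
    {C : ℝ} (hC : ∀ n, Wp p μ2 (ν2 n) ≤ C) (hμ12 : MemPp p (μ1.conv μ2)) :
    MemPp p (compM ν1 ν2 ι hι) := by
  have := hν1.1
  have hp0 : 0 < p := by positivity
  refine ⟨compM_prob _ _ _ _ fun n => (hν2 n).1, ?_⟩
  obtain ⟨γ, hγ, h2⟩ := comp_wp_aux hp ι hι hμ1 hμ2 hν1 hν2 hC one_pos
  have hm := lmink γ hp (u := fun q : Ed d × Ed d => q.1) (v := fun q => q.2 - q.1)
      (by fun_prop) (by fun_prop)
  simp only [add_sub_cancel] at hm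
  rw [coupling_fst hγ (F := fun x => (‖x‖₊ : ℝ≥0∞) ^ p) (by fun_prop),
      coupling_snd hγ (F := fun x => (‖x‖₊ : ℝ≥0∞) ^ p) (by fun_prop)] at hm
  have h3 : (∫⁻ x, (‖x‖₊ : ℝ≥0∞) ^ p ∂(compM ν1 ν2 ι hι)) ^ (1 / p) < ∞ :=
    hm.trans_lt (ENNReal.add_lt_top.2 ⟨ENNReal.rpow_lt_top_of_nonneg (by positivity) hμ12.2.ne,
      h2.trans_lt ENNReal.ofReal_lt_top⟩)
  exact (ENNReal.rpow_lt_top_iff_of_pos (by positivity)).1 h3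

/-! ### Bounded uniformly continuous functions and good operators -/

structure BUC {d : ℕ} (f : Ed d → ℝ) : Prop where
  uc : ∀ ε > 0, ∃ δ > 0, ∀ h : Ed d, ‖h‖ < δ → ∀ x, |f (x + h) - f x| ≤ ε
  bd : ∃ M : ℝ, ∀ x, |f x| ≤ M

lemma BUC.cont {d : ℕ} {f : Ed d → ℝ} (hf : BUC f) : Continuous f := by
  rw [Metric.continuous_iff]
  intro x ε hε
  obtain ⟨δ, hδ, h⟩ := hf.uc (ε / 2) (by positivity)
  refine ⟨δ, hδ, fun y hy => ?_⟩
  have := h (y - x) (by rwa [← dist_eq_norm]) x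
  rw [add_sub_cancel] at this
  rw [Real.dist_eq]
  linarith

lemma BUC.trans {d : ℕ} {f : Ed d → ℝ} (hf : BUC f) (h : Ed d) : BUC (fun y => f (y + h)) := by
  obtain ⟨M, hM⟩ := hf.bd
  refine ⟨fun ε hε => ?_, M, fun x => hM _⟩
  obtain ⟨δ, hδ, hh⟩ := hf.uc ε hε
  refine ⟨δ, hδ, fun k hk x => ?_⟩
  have := hh k hk (x + h)
  rwa [add_right_comm] at this

lemma BUC.zero {d : ℕ} : BUC (fun _ : Ed d => (0 : ℝ)) :=
  ⟨fun ε hε => ⟨1, one_pos, fun h _ x => by simpa using hε.le⟩, 0, fun x => by simp⟩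

lemma BUC.integrable {d : ℕ} {f : Ed d → ℝ} (hf : BUC f) (ν : Measure (Ed d))
    [IsProbabilityMeasure ν] (x : Ed d) : Integrable (fun y => f (x + y)) ν := by
  obtain ⟨M, hM⟩ := hf.bd
  have : Continuous (fun y => f (x + y)) := hf.cont.comp (by fun_prop)
  exact Integrable.of_bound (C := M) this.aestronglyMeasurable (Eventually.of_forall fun q => hM _)

lemma BUC.convComb {d : ℕ} {f g : Ed d → ℝ} (hf : BUC f) (hg : BUC g) {l : ℝ} (h0 : 0 ≤ l)
    (h1 : l ≤ 1) : BUC (fun y => l * f y + (1 - l) * g y) := by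
  have h1' : 0 ≤ 1 - l := by linarith
  constructor
  · intro ε hε
    obtain ⟨δ, hδ, h⟩ := hf.uc ε hε
    obtain ⟨δ', hδ', h'⟩ := hg.uc ε hε
    refine ⟨min δ δ', by positivity, fun k hk x => ?_⟩
    have a := abs_le.1 (h k (hk.trans_le (min_le_left _ _)) x)
    have b := abs_le.1 (h' k (hk.trans_le (min_le_right _ _)) x)
    rw [abs_le]
    constructor <;> nlinarith [mul_le_mul_of_nonneg_left a.1 h0, mul_le_mul_of_nonneg_left a.2 h0,
      mul_le_mul_of_nonneg_left b.1 h1', mul_le_mul_of_nonneg_left b.2 h1']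
  · obtain ⟨M, hM⟩ := hf.bd
    obtain ⟨N, hN⟩ := hg.bd
    refine ⟨l * M + (1 - l) * N, fun x => ?_⟩
    have a := abs_le.1 (hM x)
    have b := abs_le.1 (hN x)
    rw [abs_le]
    constructor <;> nlinarith [mul_le_mul_of_nonneg_left a.1 h0, mul_le_mul_of_nonneg_left a.2 h0,
      mul_le_mul_of_nonneg_left b.1 h1', mul_le_mul_of_nonneg_left b.2 h1']

structure Good {d : ℕ} (T : (Ed d → ℝ) → Ed d → ℝ) : Prop where
  sub : ∀ f g : Ed d → ℝ, BUC f → BUC g → ∀ C : ℝ, (∀ x, f x ≤ g x + C) → ∀ x, T f x ≤ T g x + C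
  zero : ∀ x, T (fun _ => 0) x = 0
  trans : ∀ f : Ed d → ℝ, BUC f → ∀ h x, T (fun y => f (y + h)) x = T f (x + h)
  conv : ∀ f g : Ed d → ℝ, BUC f → BUC g → ∀ l : ℝ, 0 ≤ l → l ≤ 1 → ∀ x,
    T (fun y => l * f y + (1 - l) * g y) x ≤ l * T f x + (1 - l) * T g x

lemma Good.mono {d : ℕ} {T : (Ed d → ℝ) → Ed d → ℝ} (hT : Good T) {f g : Ed d → ℝ} (hf : BUC f)
    (hg : BUC g) (h : ∀ x, f x ≤ g x) (x : Ed d) : T f x ≤ T g x := by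
  simpa using hT.sub f g hf hg 0 (by simpa using h) x

lemma Good.contr {d : ℕ} {T : (Ed d → ℝ) → Ed d → ℝ} (hT : Good T) {f g : Ed d → ℝ} (hf : BUC f)
    (hg : BUC g) {C : ℝ} (h : ∀ x, |f x - g x| ≤ C) (x : Ed d) : |T f x - T g x| ≤ C := by
  have h1 := hT.sub f g hf hg C (fun x => by linarith [(abs_le.1 (h x)).2]) x
  have h2 := hT.sub g f hg hf C (fun x => by linarith [(abs_le.1 (h x)).1]) x
  rw [abs_le]
  constructor <;> linarith

lemma Good.abs_le {d : ℕ} {T : (Ed d → ℝ) → Ed d → ℝ} (hT : Good T) {f : Ed d → ℝ} (hf : BUC f)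
    {M : ℝ} (h : ∀ x, |f x| ≤ M) (x : Ed d) : |T f x| ≤ M := by
  simpa [hT.zero] using hT.contr hf BUC.zero (C := M) (by simpa using h) x

lemma Good.modulus {d : ℕ} {T : (Ed d → ℝ) → Ed d → ℝ} (hT : Good T) {f : Ed d → ℝ} (hf : BUC f)
    {C : ℝ} {h : Ed d} (hh : ∀ x, |f (x + h) - f x| ≤ C) (x : Ed d) :
    |T f (x + h) - T f x| ≤ C := by
  rw [← hT.trans f hf]
  exact hT.contr (hf.trans h) hf hh x

lemma Good.buc {d : ℕ} {T : (Ed d → ℝ) → Ed d → ℝ} (hT : Good T) {f : Ed d → ℝ} (hf : BUC f) :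
    BUC (T f) := by
  constructor
  · intro ε hε
    obtain ⟨δ, hδ, h⟩ := hf.uc ε hε
    exact ⟨δ, hδ, fun k hk x => hT.modulus hf (h k hk) x⟩
  · obtain ⟨M, hM⟩ := hf.bd
    exact ⟨M, hT.abs_le hf hM⟩

lemma Good.comp {d : ℕ} {T U : (Ed d → ℝ) → Ed d → ℝ} (hT : Good T) (hU : Good U) :
    Good (fun f => T (U f)) := by
  refine ⟨fun f g hf hg C h x => hT.sub _ _ (hU.buc hf) (hU.buc hg) C (hU.sub f g hf hg C h) x,
    fun x => ?_, fun f hf h x => ?_, fun f g hf hg l h0 h1 x => ?_⟩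
  · have : U (fun _ => 0) = fun _ => 0 := funext hU.zero
    simp only [this, hT.zero]
  · have : U (fun y => f (y + h)) = fun y => U f (y + h) := funext fun y => hU.trans f hf h y
    simp only [this]
    exact hT.trans _ (hU.buc hf) h x
  · refine (hT.mono (hU.buc (hf.convComb hg h0 h1))
      ((hU.buc hf).convComb (hU.buc hg) h0 h1) (hU.conv f g hf hg l h0 h1) x).trans ?_
    exact hT.conv _ _ (hU.buc hf) (hU.buc hg) l h0 h1 x

lemma Good.id {d : ℕ} : Good (fun f : Ed d → ℝ => f) :=
  ⟨fun _ _ _ _ _ h => h, fun _ => rfl, fun _ _ _ _ => rfl, fun _ _ _ _ _ _ _ _ => le_rfl⟩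

lemma Good.iterate {d : ℕ} {T : (Ed d → ℝ) → Ed d → ℝ} (hT : Good T) (k : ℕ) : Good (T^[k]) := by
  induction k with
  | zero => exact Good.id
  | succ k ih =>
    rw [Function.iterate_succ']
    exact hT.comp ih

lemma Good.lim {d : ℕ} {T : ℕ → (Ed d → ℝ) → Ed d → ℝ} {S : (Ed d → ℝ) → Ed d → ℝ}
    (hT : ∀ n, Good (T n))
    (h : ∀ f, BUC f → ∀ x, Tendsto (fun n => T n f x) atTop (𝓝 (S f x))) : Good S := by
  refine ⟨fun f g hf hg C hfg x => ?_, fun x => ?_, fun f hf k x => ?_,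
    fun f g hf hg l h0 h1 x => ?_⟩
  · exact le_of_tendsto_of_tendsto' (h f hf x) ((h g hg x).add_const C)
      fun n => (hT n).sub f g hf hg C hfg x
  · refine tendsto_nhds_unique (h _ BUC.zero x) ?_
    simp only [(hT _).zero]
    exact tendsto_const_nhds
  · refine tendsto_nhds_unique (h _ (hf.trans k) x) ?_
    simp only [(hT _).trans f hf]
    exact h f hf _
  · exact le_of_tendsto_of_tendsto' (h _ (hf.convComb hg h0 h1) x)
      (((h f hf x).const_mul l).add ((h g hg x).const_mul (1 - l)))
      fun n => (hT n).conv f g hf hg l h0 h1 x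

/-! ### The linear operator -/

def Uop {d : ℕ} (ν : Measure (Ed d)) (f : Ed d → ℝ) (x : Ed d) : ℝ := ∫ y, f (x + y) ∂ν

lemma uop_good {d : ℕ} (ν : Measure (Ed d)) [IsProbabilityMeasure ν] : Good (Uop ν) := by
  refine ⟨fun f g hf hg C h x => ?_, fun x => ?_, fun f hf h x => ?_, fun f g hf hg l h0 h1 x => ?_⟩
  · have : Uop ν g x + C = ∫ y, (g (x + y) + C) ∂ν := by
      rw [integral_add (hg.integrable ν x) (integrable_const _)]; simp [Uop]
    rw [this]
    exact integral_mono (hf.integrable ν x) ((hg.integrable ν x).add (integrable_const _))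
      fun y => h _
  · simp [Uop]
  · simp only [Uop]
    congr 1; ext y; congr 1; abel
  · simp only [Uop]
    rw [integral_add ((hf.integrable ν x).const_mul _) ((hg.integrable ν x).const_mul _),
      integral_const_mul, integral_const_mul]

lemma uop_conv {d : ℕ} (μ1 μ2 : Measure (Ed d)) [IsProbabilityMeasure μ1]
    [IsProbabilityMeasure μ2] {f : Ed d → ℝ} (hf : BUC f) (x : Ed d) :
    Uop (μ1.conv μ2) f x = Uop μ1 (Uop μ2 f) x := by
  unfold Uop
  rw [integral_conv (hf.integrable _ x)]
  simp only [add_assoc]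

/-! ### The one-step operator -/

lemma le_sop {d : ℕ} {p : ℝ} {φ : ℝ≥0 → ℝ≥0∞} {μt : Measure (Ed d)} {t : ℝ}
    {f : Ed d → ℝ} (hf : BUC f) {ν : Measure (Ed d)} (hν : MemPp p ν) {c : ℝ}
    (hc : Adm φ t (Wp p μt ν) c) (x : Ed d) :
    (∫ y, f (x + y) ∂ν) - c ≤ Sop p φ μt t f x := by
  obtain ⟨M, hM⟩ := hf.bd
  refine le_csSup ⟨M, ?_⟩ ⟨ν, hν, c, hc.1, hc.2, rfl⟩
  rintro r ⟨ν', hν', c', hc', -, rfl⟩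
  have := hν'.1
  have h := (abs_le.1 ((uop_good ν').abs_le hf hM x)).2
  unfold Uop at h
  linarith

lemma sop_le {d : ℕ} {p : ℝ} (hp : 1 < p) {φ : ℝ≥0 → ℝ≥0∞} (hφ : IsPenalty p φ)
    {μt : Measure (Ed d)} (hμ : MemPp p μt) {t : ℝ} {f : Ed d → ℝ} {x : Ed d} {B : ℝ}
    (h : ∀ ν c, MemPp p ν → Adm φ t (Wp p μt ν) c → (∫ y, f (x + y) ∂ν) - c ≤ B) :
    Sop p φ μt t f x ≤ B := by
  refine csSup_le ?_ ?_
  · have := adm_zero hφ t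
    rw [← wp_self hp μt] at this
    exact ⟨_, μt, hμ, 0, le_rfl, by simpa [wp_self hp μt] using this.2, rfl⟩
  · rintro r ⟨ν, hν, c, hc, hc2, rfl⟩
    exact h ν c hν ⟨hc, hc2⟩

lemma uop_le_sop {d : ℕ} {p : ℝ} (hp : 1 < p) {φ : ℝ≥0 → ℝ≥0∞} (hφ : IsPenalty p φ)
    {μt : Measure (Ed d)} (hμ : MemPp p μt) {t : ℝ} {f : Ed d → ℝ} (hf : BUC f) (x : Ed d) :
    Uop μt f x ≤ Sop p φ μt t f x := by
  have h := le_sop (t := t) hf hμ (c := 0) (φ := φ) (μt := μt)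
    (by rw [wp_self hp]; exact adm_zero hφ t) x
  simpa [Uop] using h

lemma sop_good {d : ℕ} {p : ℝ} (hp : 1 < p) {φ : ℝ≥0 → ℝ≥0∞} (hφ : IsPenalty p φ)
    {μt : Measure (Ed d)} (hμ : MemPp p μt) (t : ℝ) : Good (Sop p φ μt t) := by
  refine ⟨fun f g hf hg C h x => ?_, fun x => ?_, fun f hf h x => ?_, fun f g hf hg l h0 h1 x => ?_⟩
  · refine sop_le hp hφ hμ fun ν c hν hc => ?_
    have := hν.1
    have h1 := (uop_good ν).sub f g hf hg C h x
    have h2 := le_sop hg hν hc x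
    unfold Uop at h1
    linarith
  · refine le_antisymm (sop_le hp hφ hμ fun ν c hν hc => by simpa using hc.1) ?_
    have := uop_le_sop hp hφ hμ (t := t) (BUC.zero (d := d)) x
    simpa [Uop] using this
  · unfold Sop
    have : ∀ y, x + y + h = x + h + y := fun y => by abel
    simp only [this]
  · refine sop_le hp hφ hμ fun ν c hν hc => ?_
    have := hν.1
    have h3 := (uop_good ν).conv f g hf hg l h0 h1 x
    have h2 := le_sop hg hν hc x
    have h4 := le_sop hf hν hc x
    unfold Uop at h3
    have h1' : 0 ≤ 1 - l := by linarith
    nlinarith [mul_le_mul_of_nonneg_left h4 h0, mul_le_mul_of_nonneg_left h2 h1']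

lemma sop_comp {d : ℕ} {p : ℝ} (hp : 1 < p) {φ : ℝ≥0 → ℝ≥0∞} (hφ : IsPenalty p φ)
    {μ1 μ2 : Measure (Ed d)} (hμ1 : MemPp p μ1) (hμ2 : MemPp p μ2) (hμ12 : MemPp p (μ1.conv μ2))
    {s t : ℝ} (hs : 0 < s) (ht : 0 < t) {f : Ed d → ℝ} (hf : BUC f) (x : Ed d) :
    Sop p φ μ1 s (Sop p φ μ2 t f) x ≤ Sop p φ (μ1.conv μ2) (s + t) f x := by
  have hp0 : 0 < p := by positivity
  have hG := sop_good hp hφ hμ2 t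
  set g := Sop p φ μ2 t f with hg
  have hgB : BUC g := hG.buc hf
  obtain ⟨M, hM⟩ := hf.bd
  have hM0 : 0 ≤ M := (abs_nonneg _).trans (hM 0)
  refine sop_le hp hφ hμ1 fun ν1 c1 hν1 hc1 => ?_
  refine le_of_forall_pos_le_add fun ε' hε' => ?_
  obtain ⟨ε, hε, hεε⟩ : ∃ ε > 0, 3 * ε = ε' := ⟨ε' / 3, by positivity, by ring⟩
  obtain ⟨δ, hδ, hmod⟩ := hf.uc ε hε
  have hsel : ∀ n : ℕ, ∃ ν : Measure (Ed d), ∃ c : ℝ, MemPp p ν ∧ Adm φ t (Wp p μ2 ν) c ∧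
      g (x + TopologicalSpace.denseSeq (Ed d) n) - ε <
        (∫ z, f (x + TopologicalSpace.denseSeq (Ed d) n + z) ∂ν) - c := by
    intro n
    by_contra! hcon
    have := sop_le hp hφ hμ2 (f := f) (t := t) (x := x + TopologicalSpace.denseSeq (Ed d) n)
      fun ν c hν hc => hcon ν c hν hc
    rw [← hg] at this
    linarith
  choose ν2 c2 hν2 hc2 hval using hsel
  have hpr : ∀ n, IsProbabilityMeasure (ν2 n) := fun n => (hν2 n).1
  have := hν1.1
  have hcb : ∀ n, c2 n ≤ 2 * M + ε := by
    intro n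
    have h1 := (abs_le.1 (hG.abs_le hf hM (x + TopologicalSpace.denseSeq (Ed d) n))).1
    have h2 := (abs_le.1 ((uop_good (ν2 n)).abs_le hf hM
      (x + TopologicalSpace.denseSeq (Ed d) n))).2
    have h3 := hval n
    unfold Uop at h2
    rw [hg] at h3
    linarith
  obtain ⟨A, B, hA, hB, hgrow⟩ := adm_growth hp hφ
  have hC : ∀ n, Wp p μ2 (ν2 n) ≤ (A * (2 * M + ε) * t ^ (p - 1) + B * t ^ p) ^ (1 / p) := by
    intro n
    have h0 := wp_nonneg p μ2 (ν2 n)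
    rw [← root_pow hp h0]
    refine Real.rpow_le_rpow (by positivity) ((hgrow t _ _ ht h0 (hc2 n)).trans ?_) (by positivity)
    have := hcb n
    gcongr
  -- index selection
  have hex : ∀ y : Ed d, ∃ n, ‖y - TopologicalSpace.denseSeq (Ed d) n‖ < δ := by
    intro y
    obtain ⟨z, hz, n, rfl⟩ := Metric.dense_iff.1 (TopologicalSpace.denseRange_denseSeq (Ed d)) y δ hδ
    refine ⟨n, ?_⟩
    rw [Metric.mem_ball, dist_comm, dist_eq_norm] at hz
    exact hz
  classical
  set ι : Ed d → ℕ := fun y => Nat.find (hex y) with hιdef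
  have hι : Measurable ι := by
    refine measurable_find hex fun n => ?_
    exact measurableSet_lt (by fun_prop) measurable_const
  have hιs : ∀ y, ‖y - TopologicalSpace.denseSeq (Ed d) (ι y)‖ < δ := fun y => Nat.find_spec (hex y)
  have hcm : Measurable (fun y => c2 (ι y)) := measurable_from_nat.comp hι
  have hcint : Integrable (fun y => c2 (ι y)) ν1 := by
    refine Integrable.of_bound (C := 2 * M + ε) hcm.aestronglyMeasurable
      (Eventually.of_forall fun y => ?_)
    rw [Real.norm_of_nonneg (hc2 _).1]
    exact hcb _
  have hWm : Measurable (fun y => Wp p μ2 (ν2 (ι y)) ^ p) :=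
    (measurable_from_nat (f := fun n => Wp p μ2 (ν2 n) ^ p)).comp hι
  have hWint : Integrable (fun y => Wp p μ2 (ν2 (ι y)) ^ p) ν1 := by
    refine Integrable.of_bound
      (C := ((A * (2 * M + ε) * t ^ (p - 1) + B * t ^ p) ^ (1 / p)) ^ p) hWm.aestronglyMeasurable
      (Eventually.of_forall fun y => ?_)
    have h0 := wp_nonneg p μ2 (ν2 (ι y))
    rw [Real.norm_of_nonneg (by positivity)]
    exact Real.rpow_le_rpow h0 (hC _) hp0.le
  have hadm2 : Adm φ t ((∫ y, Wp p μ2 (ν2 (ι y)) ^ p ∂ν1) ^ (1 / p)) (∫ y, c2 (ι y) ∂ν1) := by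
    have hmem : (∫ y, ((Wp p μ2 (ν2 (ι y)) ^ p, c2 (ι y)) : ℝ × ℝ) ∂ν1) ∈ Kset p φ t := by
      refine (kset_convex hp hφ ht).integral_mem (kset_closed hp hφ ht)
        (Eventually.of_forall fun y => ?_) (hWint.prodMk hcint)
      refine ⟨Real.rpow_nonneg (wp_nonneg _ _ _) _, ?_⟩
      simp only
      rw [root_pow hp (wp_nonneg _ _ _)]
      exact hc2 _
    rw [integral_pair hWint hcint] at hmem
    exact hmem.2
  have hI : 0 ≤ ∫ y, Wp p μ2 (ν2 (ι y)) ^ p ∂ν1 :=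
      integral_nonneg fun y => Real.rpow_nonneg (wp_nonneg _ _ _) _
  have hadm := adm_mono hφ (by positivity) (comp_wp hp ι hι hμ1 hμ2 hν1 hν2 hC)
    (adm_add hφ hs ht (wp_nonneg _ _ _) (Real.rpow_nonneg hI _) hc1 hadm2)
  have hfin := le_sop hf (comp_memPp hp ι hι hμ1 hμ2 hν1 hν2 hC hμ12) hadm x
  have hfc : Continuous (fun y => f (x + y)) := hf.cont.comp (by fun_prop)
  obtain ⟨hi1, hi2⟩ := integral_compM ν1 ν2 ι hι hpr hfc (fun y => hM (x + y))
  rw [hi2] at hfin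
  have hlow : ∫ y, (g (x + y) - 3 * ε + c2 (ι y)) ∂ν1 ≤
      ∫ y, ∫ z, f (x + (y + z)) ∂(ν2 (ι y)) ∂ν1 := by
    refine integral_mono (((hgB.integrable ν1 x).sub (integrable_const _)).add hcint) hi1
      fun y => ?_
    simp only
    set e := TopologicalSpace.denseSeq (Ed d) (ι y) with he
    have hye := hιs y
    rw [← he] at hye
    have k1 := hval (ι y)
    rw [← he] at k1
    have k2 := hG.modulus hf (hmod (y - e) hye) (x + e)
    have k3 := (uop_good (ν2 (ι y))).modulus hf (hmod (y - e) hye) (x + e)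
    have e1 : x + e + (y - e) = x + y := by abel
    rw [e1] at k2 k3
    rw [← hg] at k2
    unfold Uop at k3
    rw [abs_le] at k2 k3
    simp only [← add_assoc]
    linarith [k2.1, k2.2, k3.1, k3.2]
  have e2 : ∫ y, (g (x + y) - 3 * ε + c2 (ι y)) ∂ν1 =
      (∫ y, g (x + y) ∂ν1) - 3 * ε + ∫ y, c2 (ι y) ∂ν1 := by
    have hi3 : Integrable (fun y => g (x + y) - 3 * ε) ν1 :=
      (hgB.integrable ν1 x).sub (integrable_const _)
    rw [integral_add hi3 hcint, integral_sub (hgB.integrable ν1 x) (integrable_const _)]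
    simp
  rw [e2] at hlow
  linarith

/-! ### Quantitative bounds -/

lemma integral_osc {d : ℕ} {p : ℝ} (hp : 1 < p) {f : Ed d → ℝ} (hf : BUC f) {M : ℝ}
    (hM : ∀ x, |f x| ≤ M) {ε δ : ℝ} (hε : 0 ≤ ε) (hδ : 0 < δ)
    (h : ∀ h : Ed d, ‖h‖ < δ → ∀ x, |f (x + h) - f x| ≤ ε) {ν : Measure (Ed d)} (hν : MemPp p ν)
    (x : Ed d) : |Uop ν f x - f x| ≤ ε + 2 * M / δ ^ p * mom p ν := by
  have := hν.1
  have hM0 : 0 ≤ M := (abs_nonneg _).trans (hM 0)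
  have hp0 : 0 < p := by positivity
  have e1 : Uop ν f x - f x = ∫ y, (f (x + y) - f x) ∂ν := by
    rw [integral_sub (hf.integrable ν x) (integrable_const _)]; simp [Uop]
  have e2 : ε + 2 * M / δ ^ p * mom p ν = ∫ y, (ε + 2 * M / δ ^ p * ‖y‖ ^ p) ∂ν := by
    rw [integral_add (integrable_const _) ((integrable_norm_rpow hp hν).const_mul _),
      integral_const_mul]
    simp [mom]
  rw [e1, e2]
  refine (norm_integral_le_integral_norm (fun y => f (x + y) - f x)).trans ?_
  refine integral_mono ((hf.integrable ν x).sub (integrable_const _)).norm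
    ((integrable_const _).add ((integrable_norm_rpow hp hν).const_mul _)) fun y => ?_
  simp only [Real.norm_eq_abs]
  by_cases hy : ‖y‖ < δ
  · have : 0 ≤ 2 * M / δ ^ p * ‖y‖ ^ p := by positivity
    linarith [h y hy x]
  · push Not at hy
    have h1 : |f (x + y) - f x| ≤ 2 * M := by
      have a := abs_le.1 (hM (x + y))
      have b := abs_le.1 (hM x)
      rw [abs_le]; constructor <;> linarith
    have h2 : δ ^ p ≤ ‖y‖ ^ p := Real.rpow_le_rpow hδ.le hy hp0.le
    have h3 : 2 * M ≤ 2 * M / δ ^ p * ‖y‖ ^ p := by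
      rw [div_mul_eq_mul_div, le_div_iff₀ (by positivity)]
      gcongr
    linarith

lemma integral_far {d : ℕ} {p : ℝ} (hp : 1 < p) {f : Ed d → ℝ} (hf : BUC f) {M : ℝ}
    (hM : ∀ x, |f x| ≤ M) {ε R : ℝ} (hε : 0 ≤ ε)
    (h : ∀ z : Ed d, R < ‖z‖ → |f z| ≤ ε) {ν : Measure (Ed d)} (hν : MemPp p ν)
    (x : Ed d) (hx : R < ‖x‖) : |Uop ν f x| ≤ ε + M / (‖x‖ - R) ^ p * mom p ν := by
  have := hν.1
  have hM0 : 0 ≤ M := (abs_nonneg _).trans (hM 0)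
  have hp0 : 0 < p := by positivity
  have hR : 0 < ‖x‖ - R := by linarith
  have e2 : ε + M / (‖x‖ - R) ^ p * mom p ν = ∫ y, (ε + M / (‖x‖ - R) ^ p * ‖y‖ ^ p) ∂ν := by
    rw [integral_add (integrable_const _) ((integrable_norm_rpow hp hν).const_mul _),
      integral_const_mul]
    simp [mom]
  rw [e2]
  refine (norm_integral_le_integral_norm (fun y => f (x + y))).trans ?_
  refine integral_mono (hf.integrable ν x).norm
    ((integrable_const _).add ((integrable_norm_rpow hp hν).const_mul _)) fun y => ?_
  simp only [Real.norm_eq_abs]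
  by_cases hy : R < ‖x + y‖
  · have : 0 ≤ M / (‖x‖ - R) ^ p * ‖y‖ ^ p := by positivity
    linarith [h _ hy]
  · push Not at hy
    have hxy : ‖x‖ - R ≤ ‖y‖ := by
      have := norm_sub_le (x + y) y
      rw [add_sub_cancel_right] at this
      linarith
    have h2 : (‖x‖ - R) ^ p ≤ ‖y‖ ^ p := Real.rpow_le_rpow hR.le hxy hp0.le
    have h3 : M ≤ M / (‖x‖ - R) ^ p * ‖y‖ ^ p := by
      rw [div_mul_eq_mul_div, le_div_iff₀ (by positivity)]
      gcongr
    linarith [hM (x + y)]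

lemma mom_le' {d : ℕ} {p : ℝ} (hp : 1 < p) {μ ν : Measure (Ed d)} (hμ : MemPp p μ)
    (hν : MemPp p ν) {a b : ℝ} (ha : mom p μ ^ (1 / p) ≤ a) (hb : Wp p μ ν ^ p ≤ b) :
    mom p ν ≤ (a + b ^ (1 / p)) ^ p := by
  have h0 := mom_nonneg p ν
  have hw := wp_nonneg p μ ν
  have h := mom_le hp hμ hν
  rw [← pow_root hp h0]
  refine Real.rpow_le_rpow (by positivity) (h.trans ?_) (by positivity)
  gcongr
  rw [← root_pow hp hw]
  exact Real.rpow_le_rpow (by positivity) hb (by positivity)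

/-- `S(0)` is the identity. -/
lemma sop_zero {d : ℕ} {p : ℝ} (hp : 1 < p) {φ : ℝ≥0 → ℝ≥0∞} (hφ : IsPenalty p φ)
    {f : Ed d → ℝ} (hf : BUC f) : Sop p φ (Measure.dirac 0) 0 f = f := by
  have hp0 : 0 < p := by positivity
  funext x
  have hD := memPp_dirac (d := d) hp
  refine le_antisymm (sop_le hp hφ hD fun ν c hν hc => ?_) ?_
  · have hw := wp_nonneg p (Measure.dirac 0) ν
    have hw0 : Wp p (Measure.dirac 0) ν = 0 := by
      have h2 := hc.2
      unfold phit at h2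
      simp only [lt_irrefl, if_false] at h2
      split_ifs at h2 with h3
      · exact le_antisymm (Real.toNNReal_eq_zero.1 h3) hw
      · simp at h2
    have hm := mom_le hp hD hν
    rw [mom_dirac hp, hw0, Real.zero_rpow (by positivity), add_zero] at hm
    have hm0 : mom p ν = 0 := by
      have h4 : mom p ν ^ (1 / p) = 0 := le_antisymm hm (Real.rpow_nonneg (mom_nonneg _ _) _)
      exact (Real.rpow_eq_zero (mom_nonneg _ _) (by positivity)).1 h4
    obtain ⟨M, hM⟩ := hf.bd
    refine le_of_forall_pos_le_add fun ε hε => ?_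
    obtain ⟨δ, hδ, h⟩ := hf.uc ε hε
    have := integral_osc hp hf hM hε.le hδ h hν x
    rw [hm0, mul_zero, add_zero, abs_le] at this
    have hc1 := hc.1
    change Uop ν f x - c ≤ _
    linarith [this.2]
  · have := uop_le_sop hp hφ hD (t := 0) hf x
    simpa [Uop] using this

lemma sop_close {d : ℕ} {p : ℝ} (hp : 1 < p) {φ : ℝ≥0 → ℝ≥0∞} (hφ : IsPenalty p φ)
    {μ : ℝ → Measure (Ed d)} (hμ : ∀ t : ℝ, 0 ≤ t → MemPp p (μ t)) (hμ0 : WContinuousAtZero p μ)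
    {f : Ed d → ℝ} (hf : BUC f) {ε : ℝ} (hε : 0 < ε) :
    ∃ δ > 0, ∀ t, 0 < t → t < δ → ∀ x, f x - ε ≤ Uop (μ t) f x ∧
      Sop p φ (μ t) t f x ≤ f x + ε := by
  have hp0 : 0 < p := by positivity
  obtain ⟨M, hM⟩ := hf.bd
  have hM0 : 0 ≤ M := (abs_nonneg _).trans (hM 0)
  obtain ⟨δ, hδ, hmod⟩ := hf.uc (ε / 2) (by positivity)
  obtain ⟨A, B, hA, hB, hgrow⟩ := adm_growth hp hφ
  set η : ℝ → ℝ := fun t => (Wp p (μ t) (Measure.dirac 0) +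
    (A * (2 * M) * t ^ (p - 1) + B * t ^ p) ^ (1 / p)) ^ p with hη
  have hcont : Continuous (fun t : ℝ => (A * (2 * M) * t ^ (p - 1) + B * t ^ p) ^ (1 / p)) := by
    refine Continuous.rpow_const ?_ (fun _ => Or.inr (by positivity))
    exact (continuous_const.mul (continuous_id.rpow_const (fun _ => Or.inr (by linarith)))).add
      (continuous_const.mul (continuous_id.rpow_const (fun _ => Or.inr hp0.le)))
  have ht2 : Tendsto (fun t : ℝ => (A * (2 * M) * t ^ (p - 1) + B * t ^ p) ^ (1 / p))
      (𝓝[>] 0) (𝓝 0) := by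
    have h := (hcont.tendsto 0).mono_left (nhdsWithin_le_nhds (s := Ioi 0))
    rw [Real.zero_rpow (by linarith), Real.zero_rpow hp0.ne', mul_zero, mul_zero, add_zero,
      Real.zero_rpow (by positivity)] at h
    exact h
  have hlim : Tendsto (fun t => 2 * M / δ ^ p * η t) (𝓝[>] 0) (𝓝 0) := by
    have h1 := (hμ0.add ht2).rpow_const (p := p) (Or.inr hp0.le)
    rw [add_zero, Real.zero_rpow hp0.ne'] at h1
    have h2 := h1.const_mul (2 * M / δ ^ p); rw [mul_zero] at h2; exact h2
  have hev := hlim.eventually (gt_mem_nhds (show (0 : ℝ) < ε / 2 by positivity))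
  rw [eventually_nhdsWithin_iff, Metric.eventually_nhds_iff] at hev
  obtain ⟨δ', hδ', hev⟩ := hev
  refine ⟨δ', hδ', fun t ht htδ x => ?_⟩
  have hsm : 2 * M / δ ^ p * η t < ε / 2 := hev (by
    rw [Real.dist_eq, sub_zero, abs_of_pos ht]; exact htδ) ht
  have hkey : ∀ ν, MemPp p ν → Wp p (μ t) ν ^ p ≤ A * (2 * M) * t ^ (p - 1) + B * t ^ p →
      |Uop ν f x - f x| ≤ ε := by
    intro ν hν hw
    have h1 := integral_osc hp hf hM (by positivity) hδ hmod hν x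
    have h2 := mom_le' hp (hμ t ht.le) hν (mom_le_dirac hp (hμ t ht.le)) hw
    have h3 : 2 * M / δ ^ p * mom p ν ≤ 2 * M / δ ^ p * η t := by gcongr
    linarith
  constructor
  · have := hkey (μ t) (hμ t ht.le) (by
      rw [wp_self hp, Real.zero_rpow hp0.ne']; positivity)
    linarith [(abs_le.1 this).1]
  · refine sop_le hp hφ (hμ t ht.le) fun ν c hν hc => ?_
    have := hν.1
    have hc1 := hc.1
    change Uop ν f x - c ≤ _
    by_cases hcM : c ≤ 2 * M
    · have hw := hgrow t _ _ ht (wp_nonneg _ _ _) hc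
      have := hkey ν hν (hw.trans (by gcongr))
      linarith [(abs_le.1 this).2]
    · push Not at hcM
      have h1 := (abs_le.1 ((uop_good ν).abs_le hf hM x)).2
      have h2 := (abs_le.1 (hM x)).1
      linarith

/-! ### Functions vanishing at infinity -/

structure CZ {d : ℕ} (f : Ed d → ℝ) : Prop where
  buc : BUC f
  van : ∀ ε > 0, ∃ R : ℝ, ∀ z : Ed d, R < ‖z‖ → |f z| ≤ ε

lemma CZ.isC0 {d : ℕ} {f : Ed d → ℝ} (hf : CZ f) : IsC0 f := by
  refine ⟨hf.buc.cont, ?_⟩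
  rw [Metric.tendsto_nhds]
  intro ε hε
  obtain ⟨R, hR⟩ := hf.van (ε / 2) (by positivity)
  filter_upwards [(tendsto_norm_cocompact_atTop (E := Ed d)).eventually_gt_atTop R] with z hz
  rw [Real.dist_eq, sub_zero]
  linarith [hR z hz]

lemma cz_of_c0 {d : ℕ} (f : C₀(Ed d, ℝ)) : CZ (⇑f) := by
  refine ⟨⟨fun ε hε => ?_, ‖f.toBCF‖, fun x => f.toBCF.norm_coe_le_norm x⟩, fun ε hε => ?_⟩
  · have hu : UniformContinuous (⇑f) := ZeroAtInftyContinuousMap.uniformContinuous f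
    obtain ⟨δ, hδ, h⟩ := Metric.uniformContinuous_iff.1 hu ε hε
    refine ⟨δ, hδ, fun k hk x => ?_⟩
    have := h (a := x + k) (b := x) (by simpa [dist_eq_norm] using hk)
    rw [Real.dist_eq] at this
    exact this.le
  · have h := (Metric.tendsto_nhds.1 (zero_at_infty f)) ε hε
    rw [← Metric.cobounded_eq_cocompact,
      (Metric.hasBasis_cobounded_compl_closedBall (0 : Ed d)).eventually_iff] at h
    obtain ⟨R, -, hR⟩ := h
    refine ⟨R, fun z hz => ?_⟩
    have := hR (x := z) (by simpa using hz)
    rw [Real.dist_eq, sub_zero] at this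
    exact this.le

lemma CZ.squeeze {d : ℕ} {f g h : Ed d → ℝ} (hf : CZ f) (hg : CZ g) (hh : BUC h)
    (h1 : ∀ x, f x ≤ h x) (h2 : ∀ x, h x ≤ g x) : CZ h := by
  refine ⟨hh, fun ε hε => ?_⟩
  obtain ⟨R, hR⟩ := hf.van ε hε
  obtain ⟨R', hR'⟩ := hg.van ε hε
  refine ⟨max R R', fun z hz => ?_⟩
  have a := abs_le.1 (hR z ((le_max_left _ _).trans_lt hz))
  have b := abs_le.1 (hR' z ((le_max_right _ _).trans_lt hz))
  rw [abs_le]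
  constructor <;> linarith [h1 z, h2 z]

/-- uniform decay over measures with bounded moment -/
lemma CZ.far {d : ℕ} {p : ℝ} (hp : 1 < p) {f : Ed d → ℝ} (hf : CZ f) (m : ℝ) {ε : ℝ}
    (hε : 0 < ε) : ∃ R : ℝ, ∀ ν : Measure (Ed d), MemPp p ν → mom p ν ≤ m →
      ∀ x, R < ‖x‖ → |Uop ν f x| ≤ ε := by
  have hp0 : 0 < p := by positivity
  obtain ⟨M, hM⟩ := hf.buc.bd
  have hM0 : 0 ≤ M := (abs_nonneg _).trans (hM 0)
  obtain ⟨R, hR⟩ := hf.van (ε / 2) (by positivity)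
  have hlim : Tendsto (fun r : ℝ => M * m / (r - R) ^ p) atTop (𝓝 0) := by
    refine Tendsto.div_atTop tendsto_const_nhds ?_
    exact (_root_.tendsto_rpow_atTop hp0).comp (tendsto_atTop_add_const_right _ (-R) tendsto_id)
  obtain ⟨R', hR'⟩ := eventually_atTop.1
    (hlim.eventually (gt_mem_nhds (show (0 : ℝ) < ε / 2 by positivity)))
  refine ⟨max R R', fun ν hν hm x hx => ?_⟩
  have hx1 : R < ‖x‖ := (le_max_left _ _).trans_lt hx
  have h1 := integral_far hp hf.buc hM (by positivity) hR hν x hx1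
  have h2 := hR' ‖x‖ ((le_max_right _ _).trans hx.le)
  have h3 : 0 < ‖x‖ - R := by linarith
  have h4 : M / (‖x‖ - R) ^ p * mom p ν ≤ M * m / (‖x‖ - R) ^ p := by
    rw [div_mul_eq_mul_div]
    gcongr
  linarith

lemma uop_cz {d : ℕ} {p : ℝ} (hp : 1 < p) {f : Ed d → ℝ} (hf : CZ f) {ν : Measure (Ed d)}
    (hν : MemPp p ν) : CZ (Uop ν f) := by
  have := hν.1
  refine ⟨(uop_good ν).buc hf.buc, fun ε hε => ?_⟩
  obtain ⟨R, hR⟩ := hf.far hp (mom p ν) hε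
  exact ⟨R, fun z hz => hR ν hν le_rfl z hz⟩

lemma sop_cz {d : ℕ} {p : ℝ} (hp : 1 < p) {φ : ℝ≥0 → ℝ≥0∞} (hφ : IsPenalty p φ)
    {μt : Measure (Ed d)} (hμ : MemPp p μt) {t : ℝ} (ht : 0 < t) {f : Ed d → ℝ} (hf : CZ f) :
    CZ (Sop p φ μt t f) := by
  refine ⟨(sop_good hp hφ hμ t).buc hf.buc, fun ε hε => ?_⟩
  obtain ⟨M, hM⟩ := hf.buc.bd
  have hM0 : 0 ≤ M := (abs_nonneg _).trans (hM 0)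
  obtain ⟨A, B, hA, hB, hgrow⟩ := adm_growth hp hφ
  obtain ⟨R, hR⟩ := (uop_cz hp hf hμ).van ε hε
  obtain ⟨R', hR'⟩ := hf.far hp
    ((mom p μt ^ (1 / p) + (A * M * t ^ (p - 1) + B * t ^ p) ^ (1 / p)) ^ p) hε
  refine ⟨max R R', fun x hx => abs_le.2 ⟨?_, ?_⟩⟩
  · have h1 := abs_le.1 (hR x ((le_max_left _ _).trans_lt hx))
    linarith [uop_le_sop hp hφ hμ (t := t) hf.buc x]
  · refine sop_le hp hφ hμ fun ν c hν hc => ?_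
    have := hν.1
    have hc1 := hc.1
    change Uop ν f x - c ≤ _
    by_cases hcM : c ≤ M
    · have hw := hgrow t _ _ ht (wp_nonneg _ _ _) hc
      have h2 := mom_le' hp hμ hν le_rfl
        (hw.trans (b := A * c * t ^ (p - 1) + B * t ^ p) (c := A * M * t ^ (p - 1) + B * t ^ p)
          (by gcongr))
      have := hR' ν hν h2 x ((le_max_right _ _).trans_lt hx)
      linarith [(abs_le.1 this).2]
    · push Not at hcM
      have h1 := (abs_le.1 ((uop_good ν).abs_le hf.buc hM x)).2
      linarith

/-! ### Abstract iteration scheme -/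

structure Fam {d : ℕ} (A V : ℝ → (Ed d → ℝ) → Ed d → ℝ) : Prop where
  good : ∀ t, 0 ≤ t → Good (A t)
  zero : ∀ f, BUC f → A 0 f = f
  comp : ∀ s t, 0 ≤ s → 0 ≤ t → ∀ f, BUC f → ∀ x, A s (A t f) x ≤ A (s + t) f x
  vgood : ∀ t, 0 ≤ t → Good (V t)
  vcomp : ∀ s t, 0 ≤ s → 0 ≤ t → ∀ f, BUC f → ∀ x, V (s + t) f x = V s (V t f) x
  vle : ∀ t, 0 ≤ t → ∀ f, BUC f → ∀ x, V t f x ≤ A t f x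
  cz : ∀ t, 0 ≤ t → ∀ f, CZ f → CZ (A t f)
  vcz : ∀ t, 0 ≤ t → ∀ f, CZ f → CZ (V t f)
  close : ∀ f, BUC f → ∀ ε, 0 < ε → ∃ δ > 0, ∀ t, 0 < t → t < δ → ∀ x,
    f x - ε ≤ V t f x ∧ A t f x ≤ f x + ε

def It {d : ℕ} (A : ℝ → (Ed d → ℝ) → Ed d → ℝ) (n : ℕ) (t : ℝ) (f : Ed d → ℝ) : Ed d → ℝ :=
  (A ((2 : ℝ) ^ n)⁻¹)^[⌊(2:ℝ)^n * t⌋₊] (A (t - ⌊(2:ℝ)^n * t⌋₊ * ((2:ℝ)^n)⁻¹) f)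

def Li {d : ℕ} (A : ℝ → (Ed d → ℝ) → Ed d → ℝ) (t : ℝ) (f : Ed d → ℝ) (x : Ed d) : ℝ :=
  ⨅ n : ℕ, It A n t f x

section
variable {d : ℕ} {A V : ℝ → (Ed d → ℝ) → Ed d → ℝ}

lemma rem_nonneg (n : ℕ) {t : ℝ} (ht : 0 ≤ t) :
    0 ≤ t - ⌊(2:ℝ)^n * t⌋₊ * ((2:ℝ)^n)⁻¹ := by
  have h2 : (0:ℝ) < 2 ^ n := by positivity
  have h := Nat.floor_le (show 0 ≤ (2:ℝ)^n * t by positivity)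
  rw [sub_nonneg, ← div_eq_mul_inv, div_le_iff₀ h2]
  linarith

lemma rem_lt (n : ℕ) (t : ℝ) :
    t - ⌊(2:ℝ)^n * t⌋₊ * ((2:ℝ)^n)⁻¹ < ((2:ℝ)^n)⁻¹ := by
  have h2 : (0:ℝ) < 2 ^ n := by positivity
  have h := Nat.lt_floor_add_one ((2:ℝ)^n * t)
  have : t < (⌊(2:ℝ)^n * t⌋₊ + 1) * ((2:ℝ)^n)⁻¹ := by
    rw [← div_eq_mul_inv, lt_div_iff₀ h2]
    linarith
  linarith

lemma hpos (n : ℕ) : (0:ℝ) ≤ ((2:ℝ)^n)⁻¹ := by positivity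

lemma Fam.it_good (H : Fam A V) (n : ℕ) {t : ℝ} (ht : 0 ≤ t) : Good (It A n t) :=
  ((H.good _ (hpos n)).iterate _).comp (H.good _ (rem_nonneg n ht))

lemma Fam.iter_cz (H : Fam A V) {h : ℝ} (hh : 0 ≤ h) (k : ℕ) {f : Ed d → ℝ} (hf : CZ f) :
    CZ ((A h)^[k] f) := by
  induction k with
  | zero => exact hf
  | succ k ih =>
    rw [Function.iterate_succ_apply']
    exact H.cz _ hh _ ih

lemma Fam.it_cz (H : Fam A V) (n : ℕ) {t : ℝ} (ht : 0 ≤ t) {f : Ed d → ℝ} (hf : CZ f) :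
    CZ (It A n t f) :=
  H.iter_cz (hpos n) _ (H.cz _ (rem_nonneg n ht) _ hf)

lemma Fam.iter_two (H : Fam A V) {h : ℝ} (hh : 0 ≤ h) (k : ℕ) {f : Ed d → ℝ} (hf : BUC f)
    (x : Ed d) : (A h)^[2 * k] f x ≤ (A (2 * h))^[k] f x := by
  have hG := H.good h hh
  have hG2 := H.good (2 * h) (by positivity)
  induction k generalizing x with
  | zero => exact le_rfl
  | succ k ih =>
    rw [show 2 * (k + 1) = 2 * k + 1 + 1 by ring, Function.iterate_succ_apply',
      Function.iterate_succ_apply', Function.iterate_succ_apply']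
    have h1 := H.comp h h hh hh _ ((hG.iterate (2 * k)).buc hf) x
    rw [← two_mul] at h1
    exact h1.trans (hG2.mono ((hG.iterate (2 * k)).buc hf) ((hG2.iterate k).buc hf) ih x)

lemma Fam.it_succ (H : Fam A V) (n : ℕ) {t : ℝ} (ht : 0 ≤ t) {f : Ed d → ℝ} (hf : BUC f)
    (x : Ed d) : It A (n + 1) t f x ≤ It A n t f x := by
  have r0 := rem_nonneg n ht
  have r1 := rem_lt n t
  have q0 := rem_nonneg (n + 1) ht
  have q1 := rem_lt (n + 1) t
  unfold It
  set k := ⌊(2:ℝ)^n * t⌋₊ with hk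
  set k' := ⌊(2:ℝ)^(n+1) * t⌋₊ with hk'
  have h2 : (0:ℝ) < ((2:ℝ)^(n+1))⁻¹ := by positivity
  have hh : ((2:ℝ)^n)⁻¹ = 2 * ((2:ℝ)^(n+1))⁻¹ := by
    rw [pow_succ]; field_simp
  rw [hh] at r0 r1 ⊢
  set h := ((2:ℝ)^(n+1))⁻¹
  have a1 : 2 * k < k' + 1 := by
    have : (2 * k : ℝ) * h < (k' + 1) * h := by nlinarith
    have := lt_of_mul_lt_mul_right this h2.le
    exact_mod_cast this
  have a2 : k' < 2 * k + 2 := by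
    have : (k' : ℝ) * h < (2 * k + 2) * h := by nlinarith
    have := lt_of_mul_lt_mul_right this h2.le
    exact_mod_cast this
  have hG := H.good h h2.le
  have hGr := H.good _ r0
  have hGq := H.good _ q0
  have hc : k' = 2 * k ∨ k' = 2 * k + 1 := by omega
  rcases hc with hc | hc
  · have e : t - (k' : ℝ) * h = t - k * (2 * h) := by rw [hc]; push_cast; ring
    rw [e, hc]
    exact H.iter_two h2.le k (hGr.buc hf) x
  · rw [hc, Function.iterate_succ_apply]
    rw [hc] at q0 hGq
    refine le_trans ?_ (H.iter_two h2.le k (hGr.buc hf) x)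
    refine (hG.iterate (2 * k)).mono (hG.buc (hGq.buc hf)) (hGr.buc hf) (fun y => ?_) x
    have := H.comp h _ h2.le q0 f hf y
    have e : h + (t - ((2 * k + 1 : ℕ) : ℝ) * h) = t - k * (2 * h) := by push_cast; ring
    rwa [e] at this

lemma Fam.it_anti (H : Fam A V) {t : ℝ} (ht : 0 ≤ t) {f : Ed d → ℝ} (hf : BUC f)
    (x : Ed d) : Antitone fun n => It A n t f x :=
  antitone_nat_of_succ_le fun n => H.it_succ n ht hf x

lemma Fam.v_le_iter (H : Fam A V) {h r : ℝ} (hh : 0 ≤ h) (hr : 0 ≤ r) (k : ℕ) {f : Ed d → ℝ}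
    (hf : BUC f) (x : Ed d) : V (k * h + r) f x ≤ (A h)^[k] (A r f) x := by
  induction k generalizing x with
  | zero => simpa using H.vle r hr f hf x
  | succ k ih =>
    have e : ((k + 1 : ℕ) : ℝ) * h + r = h + (k * h + r) := by push_cast; ring
    have hkr : 0 ≤ k * h + r := by positivity
    rw [e, H.vcomp h _ hh hkr f hf, Function.iterate_succ_apply']
    have b1 := (H.vgood _ hkr).buc hf
    exact (H.vle h hh _ b1 x).trans ((H.good h hh).mono b1
      (((H.good h hh).iterate k).buc ((H.good r hr).buc hf)) ih x)

lemma Fam.v_le_it (H : Fam A V) (n : ℕ) {t : ℝ} (ht : 0 ≤ t) {f : Ed d → ℝ} (hf : BUC f)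
    (x : Ed d) : V t f x ≤ It A n t f x := by
  have := H.v_le_iter (hpos n) (rem_nonneg n ht) ⌊(2:ℝ)^n * t⌋₊ hf x
  rwa [add_sub_cancel] at this

lemma Fam.bdd (H : Fam A V) {t : ℝ} (ht : 0 ≤ t) {f : Ed d → ℝ} (hf : BUC f) (x : Ed d) :
    BddBelow (range fun n => It A n t f x) := by
  refine ⟨V t f x, ?_⟩
  rintro _ ⟨n, rfl⟩
  exact H.v_le_it n ht hf x

lemma Fam.tend (H : Fam A V) {t : ℝ} (ht : 0 ≤ t) {f : Ed d → ℝ} (hf : BUC f) (x : Ed d) :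
    Tendsto (fun n => It A n t f x) atTop (𝓝 (Li A t f x)) :=
  tendsto_atTop_ciInf (H.it_anti ht hf x) (H.bdd ht hf x)

lemma Fam.li_good (H : Fam A V) {t : ℝ} (ht : 0 ≤ t) : Good (Li A t) :=
  Good.lim (fun n => H.it_good n ht) fun _ hf x => H.tend ht hf x

lemma Fam.li_le (H : Fam A V) (n : ℕ) {t : ℝ} (ht : 0 ≤ t) {f : Ed d → ℝ} (hf : BUC f)
    (x : Ed d) : Li A t f x ≤ It A n t f x := ciInf_le (H.bdd ht hf x) n

lemma Fam.v_le_li (H : Fam A V) {t : ℝ} (ht : 0 ≤ t) {f : Ed d → ℝ} (hf : BUC f)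
    (x : Ed d) : V t f x ≤ Li A t f x := le_ciInf fun n => H.v_le_it n ht hf x

lemma Fam.li_cz (H : Fam A V) {t : ℝ} (ht : 0 ≤ t) {f : Ed d → ℝ} (hf : CZ f) :
    CZ (Li A t f) :=
  (H.vcz t ht f hf).squeeze (H.it_cz 0 ht hf) ((H.li_good ht).buc hf.buc)
    (H.v_le_li ht hf.buc) (H.li_le 0 ht hf.buc)

lemma Fam.it_zero (H : Fam A V) (n : ℕ) {f : Ed d → ℝ} (hf : BUC f) : It A n 0 f = f := by
  simp [It, H.zero f hf]

lemma Fam.li_zero (H : Fam A V) {f : Ed d → ℝ} (hf : BUC f) : Li A 0 f = f := by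
  funext x
  simp [Li, H.it_zero _ hf]

/-- Dini. -/
lemma Fam.dini (H : Fam A V) {t : ℝ} (ht : 0 ≤ t) {f : Ed d → ℝ} (hf : CZ f) {ε : ℝ}
    (hε : 0 < ε) : ∀ᶠ n in atTop, ∀ x, |It A n t f x - Li A t f x| ≤ ε := by
  obtain ⟨R, hR⟩ := (H.it_cz 0 ht hf).van (ε / 2) (by positivity)
  obtain ⟨R', hR'⟩ := (H.li_cz ht hf).van (ε / 2) (by positivity)
  have hU : TendstoUniformlyOn (fun n => It A n t f) (Li A t f) atTop
      (Metric.closedBall (0 : Ed d) (max R R')) := by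
    refine Antitone.tendstoUniformlyOn_of_forall_tendsto (isCompact_closedBall _ _)
      (fun n => ((H.it_good n ht).buc hf.buc).cont.continuousOn)
      (fun x _ => H.it_anti ht hf.buc x) ((H.li_good ht).buc hf.buc).cont.continuousOn
      (fun x _ => H.tend ht hf.buc x)
  filter_upwards [Metric.tendstoUniformlyOn_iff.1 hU ε hε] with n hn x
  have hle := H.li_le n ht hf.buc x
  by_cases hx : ‖x‖ ≤ max R R'
  · have := hn x (by simpa using hx)
    rw [dist_comm, Real.dist_eq] at this
    exact this.le
  · push Not at hx
    have a := abs_le.1 (hR x ((le_max_left _ _).trans_lt hx))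
    have b := abs_le.1 (hR' x ((le_max_right _ _).trans_lt hx))
    have c := H.it_anti ht hf.buc x (Nat.zero_le n)
    simp only at c
    rw [abs_le]
    constructor <;> linarith

lemma Fam.strong (H : Fam A V) {f : Ed d → ℝ} (hf : BUC f) {ε : ℝ} (hε : 0 < ε) :
    ∃ δ > 0, ∀ t, 0 ≤ t → t < δ → ∀ x, |Li A t f x - f x| ≤ ε := by
  obtain ⟨δ, hδ, h⟩ := H.close f hf ε hε
  refine ⟨min δ 1, by positivity, fun t ht htd x => ?_⟩
  rcases ht.eq_or_lt with rfl | ht0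
  · rw [H.li_zero hf]; simpa using hε.le
  · obtain ⟨h1, h2⟩ := h t ht0 (htd.trans_le (min_le_left _ _)) x
    have h3 := H.v_le_li ht hf x
    have h4 := H.li_le 0 ht hf x
    have h5 : It A 0 t f = A t f := by
      have : ⌊t⌋₊ = 0 := Nat.floor_eq_zero.2 (htd.trans_le (min_le_right _ _))
      simp [It, this]
    rw [h5] at h4
    rw [abs_le]
    constructor <;> linarith

lemma Fam.it_add (H : Fam A V) (n j : ℕ) {s : ℝ} (hs : 0 ≤ s) {f : Ed d → ℝ} (hf : BUC f) :
    It A n (j * ((2:ℝ)^n)⁻¹ + s) f = It A n (j * ((2:ℝ)^n)⁻¹) (It A n s f) := by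
  have h2 : (2:ℝ) ^ n ≠ 0 := by positivity
  have e1 : (2:ℝ)^n * (j * ((2:ℝ)^n)⁻¹ + s) = (2:ℝ)^n * s + j := by field_simp; ring
  have e2 : (2:ℝ)^n * (j * ((2:ℝ)^n)⁻¹) = j := by field_simp
  have f1 : ⌊(2:ℝ)^n * (j * ((2:ℝ)^n)⁻¹ + s)⌋₊ = j + ⌊(2:ℝ)^n * s⌋₊ := by
    rw [e1, Nat.floor_add_natCast (by positivity), add_comm]
  have f2 : ⌊(2:ℝ)^n * (j * ((2:ℝ)^n)⁻¹)⌋₊ = j := by rw [e2, Nat.floor_natCast]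
  have hb := (H.it_good n hs).buc hf
  rw [It, f1, It.eq_1 A n (j * ((2:ℝ)^n)⁻¹), f2, sub_self, H.zero _ hb, It,
    Function.iterate_add_apply]
  congr 3
  push_cast
  ring

lemma dyadic_up (m j k : ℕ) : (j : ℝ) * ((2:ℝ)^m)⁻¹ = ((j * 2 ^ k : ℕ) : ℝ) * ((2:ℝ)^(m+k))⁻¹ := by
  push_cast
  rw [pow_add]
  field_simp

lemma Fam.li_dyadic (H : Fam A V) (m j : ℕ) {s : ℝ} (hs : 0 ≤ s) {f : Ed d → ℝ} (hf : CZ f)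
    (x : Ed d) : Li A (j * ((2:ℝ)^m)⁻¹ + s) f x = Li A (j * ((2:ℝ)^m)⁻¹) (Li A s f) x := by
  set t : ℝ := j * ((2:ℝ)^m)⁻¹ with htdef
  have ht : 0 ≤ t := by positivity
  have hL := H.li_cz hs hf
  refine tendsto_nhds_unique (H.tend (add_nonneg ht hs) hf.buc x) ?_
  have h1 := H.tend ht hL.buc x
  have h2 : Tendsto (fun n => It A n (t + s) f x - It A n t (Li A s f) x) atTop (𝓝 0) := by
    rw [Metric.tendsto_nhds]
    intro ε hε
    filter_upwards [H.dini hs hf (show 0 < ε / 2 by positivity), eventually_ge_atTop m]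
      with n hn hmn
    obtain ⟨k, rfl⟩ := Nat.exists_eq_add_of_le hmn
    have e : It A (m + k) (t + s) f = It A (m + k) t (It A (m + k) s f) := by
      rw [htdef, dyadic_up m j k]
      exact H.it_add (m + k) _ hs hf.buc
    rw [e, Real.dist_eq, sub_zero]
    have := (H.it_good (m + k) ht).contr (H.it_cz (m + k) hs hf).buc hL.buc hn x
    linarith
  simpa using h2.add h1

lemma Fam.li_semi (H : Fam A V) {t s : ℝ} (ht : 0 ≤ t) (hs : 0 ≤ s) {f : Ed d → ℝ} (hf : CZ f)
    (x : Ed d) : Li A t (Li A s f) x = Li A (t + s) f x := by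
  have hg := H.li_cz hs hf
  refine eq_of_abs_sub_nonpos (le_of_forall_pos_le_add fun ε hε => ?_)
  obtain ⟨δ1, hδ1, h1⟩ := H.strong hg.buc (show 0 < ε / 3 by positivity)
  obtain ⟨δ2, hδ2, h2⟩ := H.strong hf.buc (show 0 < ε / 3 by positivity)
  obtain ⟨n, hn⟩ : ∃ n : ℕ, 2 * ((2:ℝ)^n)⁻¹ < min δ1 δ2 := by
    have : Tendsto (fun n : ℕ => 2 * ((2:ℝ)^n)⁻¹) atTop (𝓝 0) := by
      have h := (tendsto_inv_atTop_zero.comp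
        (tendsto_pow_atTop_atTop_of_one_lt (one_lt_two (α := ℝ)))).const_mul 2
      rw [mul_zero] at h
      exact h
    exact (this.eventually (gt_mem_nhds (by positivity))).exists
  have hp := hpos n
  have hd1 := hn.trans_le (min_le_left _ _)
  have hd2 := hn.trans_le (min_le_right _ _)
  have r0 := rem_nonneg n ht
  have r1 := rem_lt n t
  have q0 := rem_nonneg n hs
  have q1 := rem_lt n s
  obtain ⟨r, hr⟩ : ∃ r, r = t - ⌊(2:ℝ)^n * t⌋₊ * ((2:ℝ)^n)⁻¹ := ⟨_, rfl⟩
  obtain ⟨q, hq⟩ : ∃ q, q = s - ⌊(2:ℝ)^n * s⌋₊ * ((2:ℝ)^n)⁻¹ := ⟨_, rfl⟩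
  rw [← hr] at r0 r1
  rw [← hq] at q0 q1
  obtain ⟨j, hj⟩ : ∃ j, j = ⌊(2:ℝ)^n * t⌋₊ := ⟨_, rfl⟩
  obtain ⟨i, hi⟩ : ∃ i, i = ⌊(2:ℝ)^n * s⌋₊ := ⟨_, rfl⟩
  rw [← hj] at hr
  rw [← hi] at hq
  have et : t = j * ((2:ℝ)^n)⁻¹ + r := by linarith
  have es : s = i * ((2:ℝ)^n)⁻¹ + q := by linarith
  have ht' : 0 ≤ j * ((2:ℝ)^n)⁻¹ := by positivity
  have hs' : 0 ≤ i * ((2:ℝ)^n)⁻¹ := by positivity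
  have hsr : 0 ≤ s + r := by linarith
  have hqr : 0 ≤ q + r := by linarith
  have E1 : Li A t (Li A s f) x = Li A (j * ((2:ℝ)^n)⁻¹) (Li A r (Li A s f)) x := by
    conv_lhs => rw [et]
    exact H.li_dyadic n j r0 hg x
  have E2 : Li A (t + s) f x = Li A (j * ((2:ℝ)^n)⁻¹) (Li A (s + r) f) x := by
    rw [show t + s = j * ((2:ℝ)^n)⁻¹ + (s + r) by linarith]
    exact H.li_dyadic n j hsr hf x
  rw [E1, E2, zero_add]
  refine (H.li_good ht').contr (H.li_cz r0 hg).buc (H.li_cz hsr hf).buc (fun y => ?_) x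
  have E3 : Li A (s + r) f y = Li A (i * ((2:ℝ)^n)⁻¹) (Li A (q + r) f) y := by
    rw [show s + r = i * ((2:ℝ)^n)⁻¹ + (q + r) by linarith]
    exact H.li_dyadic n i hqr hf y
  have E4 : Li A s f y = Li A (i * ((2:ℝ)^n)⁻¹) (Li A q f) y := by
    conv_lhs => rw [es]
    exact H.li_dyadic n i q0 hf y
  have D1 := abs_le.1 (h1 r r0 (by linarith) y)
  have D2 : |Li A s f y - Li A (s + r) f y| ≤ 2 * (ε / 3) := by
    rw [E3, E4]
    refine (H.li_good hs').contr (H.li_cz q0 hf).buc (H.li_cz hqr hf).buc (fun z => ?_) y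
    have a := abs_le.1 (h2 q q0 (by linarith) z)
    have b := abs_le.1 (h2 (q + r) hqr (by linarith) z)
    rw [abs_le]
    constructor <;> linarith
  have D3 := abs_le.1 D2
  rw [abs_le]
  constructor <;> linarith

end

lemma fam_sop {d : ℕ} {p : ℝ} (hp : 1 < p) {φ : ℝ≥0 → ℝ≥0∞} (hφ : IsPenalty p φ)
    {μ : ℝ → Measure (Ed d)} (hμ : IsConvSemigroup p μ) (hμ0 : WContinuousAtZero p μ) :
    Fam (fun t => Sop p φ (μ t) t) (fun t => Uop (μ t)) := by
  obtain ⟨h0, hc, hm⟩ := hμ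
  have hz : ∀ f : Ed d → ℝ, BUC f → Sop p φ (μ 0) 0 f = f := fun f hf => by
    rw [h0]; exact sop_zero hp hφ hf
  refine ⟨fun t ht => sop_good hp hφ (hm t ht) t, hz, fun s t hs ht f hf x => ?_,
    fun t ht => ?_, fun s t hs ht f hf x => ?_, fun t ht f hf x => uop_le_sop hp hφ (hm t ht) hf x,
    fun t ht f hf => ?_, fun t ht f hf => uop_cz hp hf (hm t ht),
    fun f hf ε hε => sop_close hp hφ hm hμ0 hf hε⟩
  · have hB := (sop_good hp hφ (hm t ht) t).buc hf
    rcases hs.eq_or_lt with rfl | hs0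
    · simp only [hz _ hB, zero_add]; exact le_rfl
    rcases ht.eq_or_lt with rfl | ht0
    · simp only [hz _ hf, add_zero]; exact le_rfl
    have h12 := hm (s + t) (by positivity)
    have e := hc s t hs ht
    rw [e] at h12
    simp only [e]
    exact sop_comp hp hφ (hm s hs) (hm t ht) h12 hs0 ht0 hf x
  · have := (hm t ht).1
    exact uop_good _
  · have := (hm t ht).1
    have := (hm s hs).1
    simp only [hc s t hs ht]
    exact uop_conv _ _ hf x
  · rcases ht.eq_or_lt with rfl | ht0
    · simp only [hz _ hf.buc]; exact hf
    · exact sop_cz hp hφ (hm t ht) ht0 hf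

/-- `(𝒮(t))_{t≥0}` is a strongly continuous, convex, monotone, normalized
contraction semigroup on `C₀(ℝ^d)`. -/
theorem stmt_2 (d : ℕ) (hd : 1 ≤ d) (p : ℝ) (hp : 1 < p)
    (φ : ℝ≥0 → ℝ≥0∞) (hφ : IsPenalty p φ)
    (μ : ℝ → Measure (Ed d)) (hμ : IsConvSemigroup p μ) (hμ0 : WContinuousAtZero p μ)
    (s t : ℝ) (hs : 0 ≤ s) (ht : 0 ≤ t) (f g : C₀(Ed d, ℝ)) :
    -- (i) `𝒮(t)` maps `C₀(ℝ^d)` to itself, is normalized, monotone, contractive, convex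
    IsC0 (Slim p φ μ t (⇑f)) ∧
    (∀ x, Slim p φ μ t (fun _ => (0:ℝ)) x = 0) ∧
    ((∀ x, f x ≤ g x) → ∀ x, Slim p φ μ t (⇑f) x ≤ Slim p φ μ t (⇑g) x) ∧
    (∀ x, |Slim p φ μ t (⇑f) x - Slim p φ μ t (⇑g) x| ≤ ‖f - g‖) ∧
    (∀ l : ℝ, 0 ≤ l → l ≤ 1 → ∀ x,
      Slim p φ μ t (fun y => l * f y + (1 - l) * g y) x ≤
        l * Slim p φ μ t (⇑f) x + (1 - l) * Slim p φ μ t (⇑g) x) ∧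
    -- (ii) `𝒮(0)f = f`
    (∀ x, Slim p φ μ 0 (⇑f) x = f x) ∧
    -- (iii) `𝒮(t)(𝒮(s)f) = 𝒮(t+s)f`
    (∀ x, Slim p φ μ t (Slim p φ μ s (⇑f)) x = Slim p φ μ (t + s) (⇑f) x) ∧
    -- (iv) strong continuity: `lim_{r↓0} ‖𝒮(r)f − f‖_∞ = 0`
    TendstoUniformly (fun r x => Slim p φ μ r (⇑f) x) (⇑f) (𝓝[>] (0:ℝ)) := by
  have H := fam_sop hp hφ hμ hμ0
  have hf := cz_of_c0 f
  have hg := cz_of_c0 g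
  have hT : Good (Slim p φ μ t) := H.li_good ht
  refine ⟨(H.li_cz ht hf).isC0, hT.zero, fun h x => hT.mono hf.buc hg.buc h x,
    fun x => hT.contr hf.buc hg.buc (fun y => (f - g).toBCF.norm_coe_le_norm y) x,
    fun l h0 h1 x => hT.conv _ _ hf.buc hg.buc l h0 h1 x,
    fun x => congrFun (H.li_zero hf.buc) x, fun x => H.li_semi ht hs hf x, ?_⟩
  rw [Metric.tendstoUniformly_iff]
  intro ε hε
  obtain ⟨δ, hδ, h⟩ := H.strong hf.buc (show 0 < ε / 2 by positivity)
  filter_upwards [Ioo_mem_nhdsGT hδ] with r hr x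
  rw [dist_comm, Real.dist_eq]
  have := h r hr.1.le hr.2 x
  change |Slim p φ μ r (⇑f) x - f x| ≤ _ at this
  linarith
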